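/- arXiv:2604.10457 — 4 statements merged into one kernel-verified Lean document; each statement's English description precedes it below -/
import Mathlib

section
/- Let ℋ be an isomorphism-closed family of labeled k-uniform hypergraphs on [v], each simple and 2-regular, with exactly v vertices and s edges. Then under the null model Q, E_Q[F_ℋ(z)] = 0 and E_Q[F_ℋ(z)²] = |ℋ| · (n)_v · v! · p^s; in particular Var_Q(F_ℋ(z)) = |ℋ| · (n)_v · v! · p^s. -/
open Finset

/-- The index set of `k`-element subsets of `[n]`, used to index the coordinates of an
observation `z ∈ {0,±1}^{binom([n],k)}`. -/
abbrev KSet (n k : ℕ) := {α : Finset (Fin n) // α.card = k}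

/-- Coordinate weights under the null model `Q`: value `0` with probability `1−p`,
values `+1` and `−1` each with probability `p/2`. -/
noncomputable def qWeight (p : ℝ) : Fin 3 → ℝ := ![1 - p, p / 2, p / 2]

/-- Coordinate weights under the planted model `P_x`: the coordinate is `0` with probability
`1−p`, equals `x_α` with probability `p(1+δ)/2` and `−x_α` with probability `p(1−δ)/2`. -/
noncomputable def pWeight (p δ : ℝ) : Fin 3 → ℝ := ![1 - p, p * (1 + δ) / 2, p * (1 - δ) / 2]

/-- Realized coordinate values under the null model. -/
noncomputable def qVal : Fin 3 → ℝ := ![0, 1, -1]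

/-- Realized coordinate values under the planted model: `0`, `x_α`, `−x_α`,
where `x_α = ∏_{i∈α} x_i`. -/
noncomputable def pVal {n k : ℕ} (x : Fin n → ℝ) (α : KSet n k) : Fin 3 → ℝ :=
  ![0, ∏ i ∈ α.1, x i, -∏ i ∈ α.1, x i]

/-- Expectation of a statistic `F` of the observation `z` under the null (Bernoulli) model
`Q`, in which the coordinates `z(α)` are independent with law given by `qWeight p`. -/
noncomputable def expQ (n k : ℕ) (p : ℝ) (F : (KSet n k → ℝ) → ℝ) : ℝ :=
  ∑ ω : KSet n k → Fin 3, (∏ α : KSet n k, qWeight p (ω α)) * F (fun α => qVal (ω α))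

/-- Expectation of a statistic `F` of the observation `z` under the planted Bernoulli model
`P_x`, in which the coordinates `z(α) = b_α x_α ξ_α` are independent. -/
noncomputable def expP (n k : ℕ) (p δ : ℝ) (x : Fin n → ℝ) (F : (KSet n k → ℝ) → ℝ) : ℝ :=
  ∑ ω : KSet n k → Fin 3, (∏ α : KSet n k, pWeight p δ (ω α)) * F (fun α => pVal x α (ω α))

/-- Extend an observation `z` indexed by `k`-subsets of `[n]` to all finsets (value `0`
on sets of the wrong size). -/
noncomputable def zext {n k : ℕ} (z : KSet n k → ℝ) (β : Finset (Fin n)) : ℝ :=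
  if h : β.card = k then z ⟨β, h⟩ else 0

/-- The embedding statistic `T_H(z) = ∑_{φ : [v] ↪ [n]} ∏_{e ∈ E(H)} z(φ(e))`
of a labeled hypergraph `H` on `[v]`. -/
noncomputable def THyp {v n k : ℕ} (H : Finset (Finset (Fin v))) (z : KSet n k → ℝ) : ℝ :=
  ∑ φ : Fin v ↪ Fin n, ∏ e ∈ H, zext z (e.map φ)

/-- Degree of a vertex `u` in an edge set `E`. -/
def hdeg {V : Type*} [DecidableEq V] (E : Finset (Finset V)) (u : V) : ℕ :=
  (E.filter (fun e => u ∈ e)).card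

/-!
The coordinates of `z` are independent with mean `0` and second moment `p`, so square-free monomials
in `z` are orthogonal, and a monomial of degree `d` has second moment `p ^ d`. Expanding
`T_H T_{H'}` over pairs of embeddings, only the pairs `(φ, ψ)` with `φ(H) = ψ(H')` survive. As `H`
has no isolated vertex, such a `φ` has the same range as `ψ`, so `φ = ψ ∘ σ` for a permutation `σ`
with `σ(H) = H'`; hence `E_Q[T_H T_{H'}] = (n)_v · #{σ | σ(H) = H'} · p ^ |H|`. Summing over `H'` in
an isomorphism-closed family, every one of the `v!` permutations is counted exactly once.
-/

section Relabelling

variable {U V W : Type*}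

/-- The image of a hypergraph, given by its edge set `H`, under an embedding `φ` of the vertices:
its edges are `φ(e)` for `e ∈ H`. Relabelling by a permutation is the case `V = W`. -/
def hmap (φ : V ↪ W) (H : Finset (Finset V)) : Finset (Finset W) :=
  H.map (mapEmbedding φ).toEmbedding

theorem mem_hmap {φ : V ↪ W} {H : Finset (Finset V)} {β : Finset W} :
    β ∈ hmap φ H ↔ ∃ e ∈ H, e.map φ = β := by
  simp [hmap]

theorem card_hmap (φ : V ↪ W) (H : Finset (Finset V)) : #(hmap φ H) = #H :=
  card_map _

theorem hmap_injective (φ : V ↪ W) : Function.Injective (hmap φ) :=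
  map_injective _

theorem hmap_trans (φ : U ↪ V) (ψ : V ↪ W) (H : Finset (Finset U)) :
    hmap (φ.trans ψ) H = hmap ψ (hmap φ H) := by
  ext β
  simp [mem_hmap, map_map]

theorem hmap_perm_eq_image [DecidableEq V] (π : Equiv.Perm V) (H : Finset (Finset V)) :
    hmap π.toEmbedding H = H.image (fun e => e.image π) := by
  ext β
  simp [mem_hmap, map_eq_image]

theorem card_eq_of_mem_hmap {k : ℕ} {H : Finset (Finset V)} (hH : ∀ e ∈ H, #e = k) (φ : V ↪ W) :
    ∀ β ∈ hmap φ H, #β = k := by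
  intro β hβ
  obtain ⟨e, he, rfl⟩ := mem_hmap.1 hβ
  rw [card_map, hH e he]

theorem hdeg_pos_iff [DecidableEq V] {H : Finset (Finset V)} {u : V} :
    0 < hdeg H u ↔ ∃ e ∈ H, u ∈ e := by
  simp [hdeg, card_pos, filter_nonempty_iff]

theorem range_subset_of_hmap_eq_hmap [DecidableEq V] {H : Finset (Finset V)}
    {H' : Finset (Finset U)} (hH : ∀ u, 0 < hdeg H u) {φ : V ↪ W} {ψ : U ↪ W}
    (h : hmap φ H = hmap ψ H') : Set.range φ ⊆ Set.range ψ := by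
  rintro _ ⟨u, rfl⟩
  obtain ⟨e, he, hue⟩ := hdeg_pos_iff.1 (hH u)
  obtain ⟨e', -, hee'⟩ := mem_hmap.1 (h ▸ mem_hmap.2 ⟨e, he, rfl⟩ : e.map φ ∈ hmap ψ H')
  obtain ⟨w, -, hw⟩ := mem_map.1 (hee' ▸ mem_map_of_mem φ hue : φ u ∈ e'.map ψ)
  exact ⟨w, hw⟩

theorem exists_perm_trans_eq_of_range_subset [Finite V] {φ ψ : V ↪ W}
    (h : Set.range φ ⊆ Set.range ψ) : ∃ σ : Equiv.Perm V, σ.toEmbedding.trans ψ = φ := by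
  choose f hf using fun u => h (Set.mem_range_self u)
  have hinj : Function.Injective f := fun a b hab => φ.injective (by rw [← hf, ← hf, hab])
  exact ⟨Equiv.ofBijective f hinj.bijective_of_finite, Function.Embedding.ext hf⟩

variable [Fintype V] [DecidableEq V]

theorem card_embedding_hmap_eq_hmap [Fintype W] [DecidableEq W] {H : Finset (Finset V)}
    (hH : ∀ u, 0 < hdeg H u) (H' : Finset (Finset V)) (ψ : V ↪ W) :
    #{φ : V ↪ W | hmap φ H = hmap ψ H'} = #{σ : Equiv.Perm V | hmap σ.toEmbedding H = H'} := by
  have htrans (σ : Equiv.Perm V) :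
      hmap (σ.toEmbedding.trans ψ) H = hmap ψ H' ↔ hmap σ.toEmbedding H = H' := by
    rw [hmap_trans, (hmap_injective ψ).eq_iff]
  symm
  refine card_bij (fun σ _ => σ.toEmbedding.trans ψ) ?_ ?_ ?_
  · simp only [mem_filter_univ, htrans, imp_self, implies_true]
  · intro σ _ τ _ hστ
    exact Equiv.ext fun u => ψ.injective (DFunLike.congr_fun hστ u)
  · intro φ hφ
    rw [mem_filter_univ] at hφ
    obtain ⟨σ, rfl⟩ :=
      exists_perm_trans_eq_of_range_subset (range_subset_of_hmap_eq_hmap hH hφ)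
    exact ⟨σ, (mem_filter_univ σ).2 ((htrans σ).1 hφ), rfl⟩

theorem sum_card_perm_hmap_eq {ℋ : Finset (Finset (Finset V))} {H : Finset (Finset V)}
    (hclosed : ∀ π : Equiv.Perm V, hmap π.toEmbedding H ∈ ℋ) :
    ∑ H' ∈ ℋ, #{σ : Equiv.Perm V | hmap σ.toEmbedding H = H'} = (Fintype.card V).factorial := by
  rw [← card_eq_sum_card_fiberwise fun σ _ => hclosed σ, card_univ, Fintype.card_perm]

end Relabelling

section NullModel

variable {n k v : ℕ}

theorem expQ_sum {ι : Type*} (p : ℝ) (t : Finset ι) (F : ι → (KSet n k → ℝ) → ℝ) :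
    expQ n k p (fun z => ∑ i ∈ t, F i z) = ∑ i ∈ t, expQ n k p (F i) := by
  simp only [expQ, mul_sum]
  exact sum_comm

theorem expQ_prod (p : ℝ) (f : KSet n k → ℝ → ℝ) :
    expQ n k p (fun z => ∏ α, f α (z α)) = ∏ α, ∑ i, qWeight p i * f α (qVal i) := by
  rw [prod_univ_sum, Fintype.piFinset_univ]
  simp only [expQ, prod_mul_distrib]

theorem sum_qWeight (p : ℝ) : ∑ i, qWeight p i = 1 := by
  simp only [Fin.sum_univ_three, qWeight, Matrix.cons_val]
  ring

theorem sum_qWeight_mul_qVal (p : ℝ) : ∑ i, qWeight p i * qVal i = 0 := by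
  simp [Fin.sum_univ_three, qWeight, qVal]

theorem sum_qWeight_mul_qVal_mul_self (p : ℝ) : ∑ i, qWeight p i * (qVal i * qVal i) = p := by
  simp [Fin.sum_univ_three, qWeight, qVal]

theorem expQ_prod_mul_prod (p : ℝ) (A B : Finset (KSet n k)) :
    expQ n k p (fun z => (∏ α ∈ A, z α) * ∏ α ∈ B, z α) = if A = B then p ^ #A else 0 := by
  have hfactor : expQ n k p (fun z => (∏ α ∈ A, z α) * ∏ α ∈ B, z α) =
      ∏ α, ∑ i, qWeight p i * ((if α ∈ A then qVal i else 1) * if α ∈ B then qVal i else 1) := by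
    simp only [← expQ_prod p fun α x => (if α ∈ A then x else 1) * if α ∈ B then x else 1,
      prod_mul_distrib, Fintype.prod_ite_mem]
  rw [hfactor]
  split_ifs with hAB
  · subst hAB
    have hmoment (α : KSet n k) :
        ∑ i, qWeight p i * ((if α ∈ A then qVal i else 1) * if α ∈ A then qVal i else 1) =
          if α ∈ A then p else 1 := by
      split_ifs <;> simp [sum_qWeight, sum_qWeight_mul_qVal_mul_self]
    simp only [hmoment, Fintype.prod_ite_mem, prod_const]
  · obtain ⟨α, hα⟩ : ∃ α, ¬(α ∈ A ↔ α ∈ B) := by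
      simpa [Finset.ext_iff] using hAB
    refine prod_eq_zero (mem_univ α) ?_
    by_cases hαA : α ∈ A <;> simp_all [sum_qWeight_mul_qVal]

theorem prod_zext {A : Finset (Finset (Fin n))} (hA : ∀ β ∈ A, #β = k) (z : KSet n k → ℝ) :
    ∏ β ∈ A, zext z β = ∏ α ∈ A.subtype (#· = k), z α := by
  rw [← prod_subtype_of_mem _ hA]
  exact prod_congr rfl fun α _ => dif_pos α.2

theorem expQ_prod_zext_mul_prod_zext (p : ℝ) {A B : Finset (Finset (Fin n))}
    (hA : ∀ β ∈ A, #β = k) (hB : ∀ β ∈ B, #β = k) :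
    expQ n k p (fun z => (∏ β ∈ A, zext z β) * ∏ β ∈ B, zext z β) =
      if A = B then p ^ #A else 0 := by
  have hsubtype : A.subtype (#· = k) = B.subtype (#· = k) ↔ A = B := by
    refine ⟨fun h => ?_, fun h => h ▸ rfl⟩
    rw [← subtype_map_of_mem hA, h, subtype_map_of_mem hB]
  simp only [prod_zext hA, prod_zext hB, expQ_prod_mul_prod, hsubtype, card_subtype,
    filter_true_of_mem hA]

theorem THyp_eq_sum_hmap (H : Finset (Finset (Fin v))) (z : KSet n k → ℝ) :
    THyp H z = ∑ φ : Fin v ↪ Fin n, ∏ β ∈ hmap φ H, zext z β := by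
  simp [THyp, hmap]

theorem expQ_THyp (p : ℝ) {H : Finset (Finset (Fin v))} (hunif : ∀ e ∈ H, #e = k)
    (hH : H.Nonempty) : expQ n k p (THyp H) = 0 := by
  have hmonomial (φ : Fin v ↪ Fin n) : expQ n k p (fun z => ∏ β ∈ hmap φ H, zext z β) = 0 := by
    have hne : hmap φ H ≠ ∅ := (hH.map (f := (mapEmbedding φ).toEmbedding)).ne_empty
    simpa [hne] using
      expQ_prod_zext_mul_prod_zext p (B := ∅) (card_eq_of_mem_hmap hunif φ) (by simp)
  simp only [funext (THyp_eq_sum_hmap H), expQ_sum, hmonomial, sum_const_zero]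

theorem expQ_THyp_mul_THyp (p : ℝ) {H H' : Finset (Finset (Fin v))} (hunif : ∀ e ∈ H, #e = k)
    (hunif' : ∀ e ∈ H', #e = k) (hH : ∀ u, 0 < hdeg H u) :
    expQ n k p (fun z => THyp H z * THyp H' z) =
      n.descFactorial v * #{σ : Equiv.Perm (Fin v) | hmap σ.toEmbedding H = H'} * p ^ #H := by
  calc expQ n k p (fun z => THyp H z * THyp H' z)
      = ∑ ψ : Fin v ↪ Fin n, ∑ φ : Fin v ↪ Fin n,
          expQ n k p (fun z => (∏ β ∈ hmap φ H, zext z β) * ∏ β ∈ hmap ψ H', zext z β) := by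
        simp only [THyp_eq_sum_hmap, sum_mul_sum, expQ_sum]
        exact sum_comm
    _ = ∑ ψ : Fin v ↪ Fin n, #{φ : Fin v ↪ Fin n | hmap φ H = hmap ψ H'} * p ^ #H := by
        simp only [expQ_prod_zext_mul_prod_zext p (card_eq_of_mem_hmap hunif _)
          (card_eq_of_mem_hmap hunif' _), card_hmap, ← sum_filter, sum_const, nsmul_eq_mul]
    _ = n.descFactorial v * #{σ : Equiv.Perm (Fin v) | hmap σ.toEmbedding H = H'} * p ^ #H := by
        simp only [card_embedding_hmap_eq_hmap hH, sum_const, card_univ,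
          Fintype.card_embedding_eq, Fintype.card_fin, nsmul_eq_mul, mul_assoc]

theorem expQ_sum_THyp (p : ℝ) {ℋ : Finset (Finset (Finset (Fin v)))}
    (hunif : ∀ H ∈ ℋ, ∀ e ∈ H, #e = k) (hℋ : ∀ H ∈ ℋ, H.Nonempty) :
    expQ n k p (fun z => ∑ H ∈ ℋ, THyp H z) = 0 := by
  rw [expQ_sum]
  exact sum_eq_zero fun H hH => expQ_THyp p (hunif H hH) (hℋ H hH)

theorem expQ_sum_THyp_sq (p : ℝ) {ℋ : Finset (Finset (Finset (Fin v)))}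
    (hunif : ∀ H ∈ ℋ, ∀ e ∈ H, #e = k) (hdeg_pos : ∀ H ∈ ℋ, ∀ u, 0 < hdeg H u)
    (hclosed : ∀ H ∈ ℋ, ∀ π : Equiv.Perm (Fin v), hmap π.toEmbedding H ∈ ℋ) :
    expQ n k p (fun z => (∑ H ∈ ℋ, THyp H z) ^ 2) =
      n.descFactorial v * v.factorial * ∑ H ∈ ℋ, p ^ #H := by
  simp only [sq, sum_mul_sum, expQ_sum]
  rw [mul_sum]
  refine sum_congr rfl fun H hH => ?_
  rw [sum_congr rfl fun H' hH' =>
      expQ_THyp_mul_THyp p (hunif H hH) (hunif H' hH') (hdeg_pos H hH),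
    ← sum_mul, ← mul_sum, ← Nat.cast_sum, sum_card_perm_hmap_eq (hclosed H hH), Fintype.card_fin]

end NullModel

theorem stmt2_general {n k v : ℕ} (hv : 1 ≤ v) (p : ℝ) (ℋ : Finset (Finset (Finset (Fin v))))
    (hunif : ∀ H ∈ ℋ, ∀ e ∈ H, #e = k) (hdeg_pos : ∀ H ∈ ℋ, ∀ u, 0 < hdeg H u)
    (hclosed : ∀ H ∈ ℋ, ∀ π : Equiv.Perm (Fin v), H.image (fun e => e.image π) ∈ ℋ) :
    expQ n k p (fun z => ∑ H ∈ ℋ, THyp H z) = 0 ∧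
    expQ n k p (fun z => (∑ H ∈ ℋ, THyp H z) ^ 2) =
      n.descFactorial v * v.factorial * ∑ H ∈ ℋ, p ^ #H ∧
    expQ n k p (fun z => (∑ H ∈ ℋ, THyp H z) ^ 2) -
        (expQ n k p (fun z => ∑ H ∈ ℋ, THyp H z)) ^ 2 =
      n.descFactorial v * v.factorial * ∑ H ∈ ℋ, p ^ #H := by
  have hmean : expQ n k p (fun z => ∑ H ∈ ℋ, THyp H z) = 0 :=
    expQ_sum_THyp p hunif fun H hH =>
      let ⟨e, he, _⟩ := hdeg_pos_iff.1 (hdeg_pos H hH ⟨0, hv⟩)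
      ⟨e, he⟩
  have hsq := expQ_sum_THyp_sq (n := n) p hunif hdeg_pos fun H hH π =>
    hmap_perm_eq_image π H ▸ hclosed H hH π
  exact ⟨hmean, hsq, by rw [hmean, hsq]; ring⟩

/-- For an isomorphism-closed family `ℋ` of simple `2`-regular labeled
`k`-uniform hypergraphs on `[v]`, each with `v` vertices and `s` edges, the statistic
`F_ℋ(z) = ∑_{H∈ℋ} T_H(z)` satisfies, under the null model `Q`:
`E_Q[F_ℋ] = 0`, `E_Q[F_ℋ²] = |ℋ|·(n)_v·v!·p^s`, and hence
`Var_Q(F_ℋ) = |ℋ|·(n)_v·v!·p^s`. -/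
theorem stmt2 (n k v s : ℕ) (hn : 1 ≤ n) (hk : 2 ≤ k) (hv : 1 ≤ v)
    (p : ℝ) (hp0 : 0 ≤ p) (hp1 : p ≤ 1)
    (ℋ : Finset (Finset (Finset (Fin v))))
    (hunif : ∀ H ∈ ℋ, ∀ e ∈ H, e.card = k)
    (hcard : ∀ H ∈ ℋ, H.card = s)
    (hreg : ∀ H ∈ ℋ, ∀ u : Fin v, hdeg H u = 2)
    (hclosed : ∀ H ∈ ℋ, ∀ π : Equiv.Perm (Fin v), H.image (fun e => e.image π) ∈ ℋ) :
    expQ n k p (fun z => ∑ H ∈ ℋ, THyp H z) = 0 ∧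
    expQ n k p (fun z => (∑ H ∈ ℋ, THyp H z) ^ 2)
      = (ℋ.card : ℝ) * (n.descFactorial v : ℝ) * (v.factorial : ℝ) * p ^ s ∧
    expQ n k p (fun z => (∑ H ∈ ℋ, THyp H z) ^ 2)
      - (expQ n k p (fun z => ∑ H ∈ ℋ, THyp H z)) ^ 2
      = (ℋ.card : ℝ) * (n.descFactorial v : ℝ) * (v.factorial : ℝ) * p ^ s := by
  have h := stmt2_general (n := n) hv p ℋ hunif (fun H hH u => by simp [hreg H hH u]) hclosed
  simpa [sum_congr rfl fun H hH => congrArg (p ^ ·) (hcard H hH), mul_assoc, mul_left_comm] using h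
end

section
/- Let H and H' be simple 2-regular labeled k-uniform hypergraphs each with s edges, let φ: V(H) ↪ [n] and ψ: V(H') ↪ [n] be injections, and let j := |{φ(e) : e ∈ E(H)} ∩ {ψ(e') : e' ∈ E(H')}| be the number of common image hyperedges. Then for every x ∈ {±1}^n, under the planted Bernoulli model P_x, E_{P_x}[ ∏_{e∈E(H)} z(φ(e)) · ∏_{e'∈E(H')} z(ψ(e')) ] = p^{2s−j} · δ^{2s−2j}. In particular, the product of planted signs x_α over the symmetric difference of the two image edge sets equals 1, because every vertex has even degree in that symmetric difference. -/
/-!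
Write `A = φ(H)` and `B = ψ(H')`. By independence of the coordinates, an edge in exactly one of
`A`, `B` contributes `E[z(α)] = p δ x_α` and an edge in both contributes `E[z(α)²] = p x_α²`, so the
expectation is `p ^ |A ∪ B| * δ ^ |A ∆ B|` times the signs `x_α` over `A` and over `B`. The signs
over a family of edges multiply to `∏ i, x i ^ deg i`, which is `1` as soon as all degrees are even;
even degrees pass from `H` and `H'` to `A` and `B`, and from these to `A ∆ B`.
-/

open Finset

section Finset

variable {ι M : Type*} [DecidableEq ι]

lemma card_symmDiff_add_two_mul_card_inter (A B : Finset ι) :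
    #(symmDiff A B) + 2 * #(A ∩ B) = #A + #B := by
  have hdisj : Disjoint (symmDiff A B) (A ∩ B) := disjoint_symmDiff_inf A B
  have hunion : symmDiff A B ∪ A ∩ B = A ∪ B := symmDiff_sup_inf A B
  have hcard := card_union_of_disjoint hdisj
  rw [hunion] at hcard
  have := card_union_add_card_inter A B
  lia

lemma prod_eq_prod_subtype_ite [CommMonoid M] {P : ι → Prop} [Fintype {i // P i}] {S : Finset ι}
    (hS : ∀ i ∈ S, P i) (f : ι → M) :
    ∏ i ∈ S, f i = ∏ i : {i // P i}, if i.1 ∈ S then f i.1 else 1 := by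
  classical
  have hsubtype : univ.filter (fun i : {i // P i} => i.1 ∈ S) = S.subtype P := by
    ext; simp
  rw [← prod_filter, hsubtype, prod_subtype_of_mem f hS]

end Finset

section Degree

variable {V W M : Type*} [DecidableEq W]

lemma hdeg_image_map_of_notMem_range {φ : V ↪ W} (E : Finset (Finset V)) {w : W}
    (hw : w ∉ Set.range φ) : hdeg (E.image fun e => e.map φ) w = 0 := by
  simp only [hdeg, card_eq_zero, filter_eq_empty_iff, forall_mem_image, mem_map]
  rintro e - ⟨u, -, hu⟩
  exact hw ⟨u, hu⟩

variable [DecidableEq V]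

lemma hdeg_symmDiff_add_two_mul_hdeg_inter (A B : Finset (Finset V)) (u : V) :
    hdeg (symmDiff A B) u + 2 * hdeg (A ∩ B) u = hdeg A u + hdeg B u := by
  have hsymmDiff : (symmDiff A B).filter (u ∈ ·) =
      symmDiff (A.filter (u ∈ ·)) (B.filter (u ∈ ·)) := by
    ext; simp only [mem_filter, mem_symmDiff]; tauto
  simpa only [hdeg, hsymmDiff, filter_inter_distrib] using
    card_symmDiff_add_two_mul_card_inter (A.filter (u ∈ ·)) (B.filter (u ∈ ·))

lemma even_hdeg_symmDiff {A B : Finset (Finset V)} {u : V} (hA : Even (hdeg A u))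
    (hB : Even (hdeg B u)) : Even (hdeg (symmDiff A B) u) := by
  have := hdeg_symmDiff_add_two_mul_hdeg_inter A B u
  grind

lemma hdeg_image_map_apply (φ : V ↪ W) (E : Finset (Finset V)) (u : V) :
    hdeg (E.image fun e => e.map φ) (φ u) = hdeg E u := by
  simp only [hdeg, filter_image, mem_map']
  exact card_image_of_injective _ (map_injective φ)

lemma even_hdeg_image_map (φ : V ↪ W) {E : Finset (Finset V)} (hE : ∀ u, Even (hdeg E u))
    (w : W) : Even (hdeg (E.image fun e => e.map φ) w) := by
  by_cases hw : w ∈ Set.range φ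
  · obtain ⟨u, rfl⟩ := hw
    rw [hdeg_image_map_apply]
    exact hE u
  · simp [hdeg_image_map_of_notMem_range E hw]

lemma prod_prod_eq_prod_pow_hdeg [CommMonoid M] (E : Finset (Finset V)) (x : V → M) :
    ∏ α ∈ E, ∏ i ∈ α, x i = ∏ i ∈ E.biUnion id, x i ^ hdeg E i := by
  rw [prod_comm' (t' := E.biUnion id) (s' := fun i => E.filter (i ∈ ·)) (by grind)]
  simp only [prod_const, hdeg]

lemma prod_prod_eq_one_of_even_hdeg [CommMonoid M] {E : Finset (Finset V)}
    (hE : ∀ i, Even (hdeg E i)) {x : V → M} (hx : ∀ i, x i ^ 2 = 1) :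
    ∏ α ∈ E, ∏ i ∈ α, x i = 1 := by
  rw [prod_prod_eq_prod_pow_hdeg]
  refine prod_eq_one fun i _ => ?_
  obtain ⟨m, hm⟩ := (hE i).two_dvd
  rw [hm, pow_mul, hx, one_pow]

end Degree

section PlantedModel

variable {n k : ℕ} (p δ : ℝ) (x : Fin n → ℝ)

lemma expP_prod (f : KSet n k → ℝ → ℝ) :
    expP n k p δ x (fun z => ∏ α, f α (z α)) =
      ∏ α, ∑ w, pWeight p δ w * f α (pVal x α w) := by
  simp only [expP, ← prod_mul_distrib, prod_univ_sum, Fintype.piFinset_univ]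

lemma sum_pWeight : ∑ w, pWeight p δ w = 1 := by
  simp only [Fin.sum_univ_three, pWeight, Matrix.cons_val]
  ring

lemma sum_pWeight_mul_pVal (α : KSet n k) :
    ∑ w, pWeight p δ w * pVal x α w = p * δ * ∏ i ∈ α.1, x i := by
  simp only [Fin.sum_univ_three, pWeight, pVal, Matrix.cons_val]
  ring

lemma sum_pWeight_mul_pVal_sq (α : KSet n k) :
    ∑ w, pWeight p δ w * pVal x α w ^ 2 = p * (∏ i ∈ α.1, x i) ^ 2 := by
  simp only [Fin.sum_univ_three, pWeight, pVal, Matrix.cons_val]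
  ring

lemma zext_coe (z : KSet n k → ℝ) (α : KSet n k) : zext z α.1 = z α :=
  dif_pos α.2

theorem expP_prod_zext_mul_prod_zext {A B : Finset (Finset (Fin n))}
    (hA : ∀ α ∈ A, #α = k) (hB : ∀ α ∈ B, #α = k) :
    expP n k p δ x (fun z => (∏ α ∈ A, zext z α) * ∏ α ∈ B, zext z α) =
      p ^ #(A ∪ B) * δ ^ #(symmDiff A B) *
        ((∏ α ∈ A, ∏ i ∈ α, x i) * ∏ α ∈ B, ∏ i ∈ α, x i) := by
  have hunion : ∀ α ∈ A ∪ B, #α = k := fun α hα => (mem_union.mp hα).elim (hA α) (hB α)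
  have hsymmDiff : ∀ α ∈ symmDiff A B, #α = k := fun α hα => hunion α (symmDiff_subset_union hα)
  simp only [← prod_const, prod_eq_prod_subtype_ite hA, prod_eq_prod_subtype_ite hB,
    prod_eq_prod_subtype_ite hunion, prod_eq_prod_subtype_ite hsymmDiff, ← prod_mul_distrib,
    zext_coe]
  rw [expP_prod p δ x fun α t => (if α.1 ∈ A then t else 1) * if α.1 ∈ B then t else 1]
  refine prod_congr rfl fun α _ => ?_
  have hmean := sum_pWeight_mul_pVal p δ x α
  have hsq := sum_pWeight_mul_pVal_sq p δ x α
  by_cases hαA : α.1 ∈ A <;> by_cases hαB : α.1 ∈ B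
  · simp [hαA, hαB, mem_symmDiff, ← sq, hsq]
  · simp [hαA, hαB, mem_symmDiff, hmean]
  · simp [hαA, hαB, mem_symmDiff, hmean]
  · simp [hαA, hαB, mem_symmDiff, sum_pWeight]

variable {x} in
theorem expP_prod_zext_mul_prod_zext_of_even_hdeg (hx : ∀ i, x i ^ 2 = 1)
    {A B : Finset (Finset (Fin n))} (hA : ∀ α ∈ A, #α = k) (hB : ∀ α ∈ B, #α = k)
    (hAeven : ∀ i, Even (hdeg A i)) (hBeven : ∀ i, Even (hdeg B i)) :
    expP n k p δ x (fun z => (∏ α ∈ A, zext z α) * ∏ α ∈ B, zext z α) =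
      p ^ (#A + #B - #(A ∩ B)) * δ ^ (#A + #B - 2 * #(A ∩ B)) := by
  have hunion : #(A ∪ B) = #A + #B - #(A ∩ B) := card_union A B
  have hsymmDiff : #(symmDiff A B) = #A + #B - 2 * #(A ∩ B) :=
    Nat.eq_sub_of_add_eq (card_symmDiff_add_two_mul_card_inter A B)
  rw [expP_prod_zext_mul_prod_zext p δ x hA hB, prod_prod_eq_one_of_even_hdeg hAeven hx,
    prod_prod_eq_one_of_even_hdeg hBeven hx, mul_one, mul_one, hunion, hsymmDiff]

end PlantedModel

theorem stmt4_general {n k : ℕ} {V V' : Type*} [DecidableEq V] [DecidableEq V'] (p δ : ℝ)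
    {x : Fin n → ℝ} (hx : ∀ i, x i = 1 ∨ x i = -1)
    {H : Finset (Finset V)} {H' : Finset (Finset V')}
    (hunif : ∀ e ∈ H, #e = k) (hunif' : ∀ e ∈ H', #e = k)
    (heven : ∀ u, Even (hdeg H u)) (heven' : ∀ u, Even (hdeg H' u))
    (φ : V ↪ Fin n) (ψ : V' ↪ Fin n) :
    expP n k p δ x (fun z => (∏ e ∈ H, zext z (e.map φ)) * ∏ e ∈ H', zext z (e.map ψ)) =
        p ^ (#H + #H' - #(H.image (fun e => e.map φ) ∩ H'.image (fun e => e.map ψ))) *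
          δ ^ (#H + #H' - 2 * #(H.image (fun e => e.map φ) ∩ H'.image (fun e => e.map ψ))) ∧
      ∏ α ∈ symmDiff (H.image fun e => e.map φ) (H'.image fun e => e.map ψ), ∏ i ∈ α, x i = 1 := by
  have hsq (i : Fin n) : x i ^ 2 = 1 := sq_eq_one_iff.mpr (hx i)
  have hA := even_hdeg_image_map φ heven
  have hB := even_hdeg_image_map ψ heven'
  refine ⟨?_, prod_prod_eq_one_of_even_hdeg (fun i => even_hdeg_symmDiff (hA i) (hB i)) hsq⟩
  have hmoment := expP_prod_zext_mul_prod_zext_of_even_hdeg p δ hsq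
    (by simpa [forall_mem_image] using hunif) (by simpa [forall_mem_image] using hunif') hA hB
  simpa only [prod_image (map_injective _).injOn,
    card_image_of_injective _ (map_injective _)] using hmoment

/-- For simple `2`-regular labeled `k`-uniform hypergraphs `H`, `H'`, each
with `s` edges, injections `φ`, `ψ` into `[n]`, and `j` the number of common image
hyperedges, under the planted Bernoulli model `P_x` the expectation of the product of the
two embedding monomials equals `p^{2s−j} δ^{2s−2j}`; in particular the product of planted
signs `x_α` over the symmetric difference of the two image edge sets equals `1`. -/
theorem stmt4 (n k v₁ v₂ s : ℕ) (hn : 1 ≤ n) (hk : 2 ≤ k)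
    (p δ : ℝ) (hp0 : 0 ≤ p) (hp1 : p ≤ 1) (hδ1 : -1 ≤ δ) (hδ2 : δ ≤ 1)
    (x : Fin n → ℝ) (hx : ∀ i, x i = 1 ∨ x i = -1)
    (H : Finset (Finset (Fin v₁))) (H' : Finset (Finset (Fin v₂)))
    (hunif : ∀ e ∈ H, e.card = k) (hunif' : ∀ e ∈ H', e.card = k)
    (hreg : ∀ u : Fin v₁, hdeg H u = 2) (hreg' : ∀ u : Fin v₂, hdeg H' u = 2)
    (hs : H.card = s) (hs' : H'.card = s)
    (φ : Fin v₁ ↪ Fin n) (ψ : Fin v₂ ↪ Fin n) :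
    expP n k p δ x (fun z =>
        (∏ e ∈ H, zext z (e.map φ)) * ∏ e ∈ H', zext z (e.map ψ))
      = p ^ (2 * s - ((H.image (fun e => e.map φ)) ∩ (H'.image (fun e => e.map ψ))).card)
        * δ ^ (2 * s
            - 2 * ((H.image (fun e => e.map φ)) ∩ (H'.image (fun e => e.map ψ))).card) ∧
    ∏ α ∈ symmDiff (H.image (fun e => e.map φ)) (H'.image (fun e => e.map ψ)),
        ∏ i ∈ α, x i = 1 := by
  simpa only [hs, hs', two_mul] using stmt4_general p δ hx hunif hunif'
    (fun u => hreg u ▸ even_two) (fun u => hreg' u ▸ even_two) φ ψ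
end

section
/- Fix k ≥ 3 and set C_k := e^{k/2+2} · k^{(k+1)/2} / k!. Then for every n ≥ 1, every integer D with 1 ≤ D ≤ n/k, and every real y ≥ 0: Σ_{t=0}^{D} N_t · y^t ≤ 1 + Σ_{t=1}^{D} (C_k · n^{k/2} · t^{k/2−1} · y)^t. Moreover, if q := C_k · n^{k/2} · D^{k/2−1} · y < 1, then Σ_{t=0}^{D} N_t · y^t ≤ 1/(1 − q). -/
open Finset

/-- `N_t`: the number of simple even `k`-uniform hypergraphs on `[n]` with exactly `t`
edges, i.e. sets of `t` distinct `k`-subsets of `[n]` in which every vertex lies in an even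
number of members. -/
noncomputable def Ncount (n k t : ℕ) : ℕ :=
  Nat.card {S : Finset (Finset (Fin n)) //
    (∀ α ∈ S, α.card = k) ∧ S.card = t ∧
    ∀ i : Fin n, Even ((S.filter (fun α => i ∈ α)).card)}

/-- The constant `C_k = e^{k/2+2} k^{(k+1)/2} / k!`. -/
noncomputable def Ck (k : ℕ) : ℝ :=
  Real.exp ((k : ℝ) / 2 + 2) * (k : ℝ) ^ (((k : ℝ) + 1) / 2) / (k.factorial : ℝ)

/-!
Reading off the vertices of the edges one after another, in all possible orders, turns an even
`k`-uniform hypergraph with `t` edges into `t! (k!) ^ t` distinct words of length `t k` in which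
every letter occurs an even number of times. In such an even word the first letter occurs a second
time; deleting both occurrences leaves a shorter even word, so that `W (m + 2) ≤ n (m + 1) W m` for
the number `W m` of even words of length `m` over `n` letters, and hence `W m ≤ (n m) ^ (m / 2)`.
Together with `t ^ t ≤ e ^ t t!` this bounds each `N_t`, and the sum is compared with a geometric
series.
-/

section InsertPair

variable {α : Type*} {m : ℕ}

/-- The word obtained from `u` by inserting two occurrences of the letter `a`: one in front, the
other at position `j` of the remaining letters. -/
def insertPair (a : α) (j : Fin (m + 1)) (u : Fin m → α) : Fin (m + 2) → α :=
  Fin.cons (α := fun _ => α) a (Fin.insertNth (α := fun _ => α) j a u)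

lemma insertPair_removeNth_tail {w : Fin (m + 2) → α} {j : Fin (m + 1)} (h : w j.succ = w 0) :
    insertPair (w 0) j (j.removeNth (Fin.tail w)) = w := by
  have insertNth_eq : Fin.insertNth (α := fun _ => α) j (w 0) (j.removeNth (Fin.tail w)) =
      Fin.tail w := by
    rw [← h]
    exact Fin.insertNth_self_removeNth j (Fin.tail w)
  rw [insertPair, insertNth_eq, Fin.cons_self_tail]

lemma card_filter_insertPair_eq [DecidableEq α] (a b : α) (j : Fin (m + 1)) (u : Fin m → α) :
    #{p | insertPair a j u p = b} = 2 * (if a = b then 1 else 0) + #{p | u p = b} := by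
  rw [card_filter, card_filter, Fin.sum_univ_succ, Fin.sum_univ_succAbove _ j]
  simp only [insertPair, Fin.cons_zero, Fin.cons_succ, Fin.insertNth_apply_same,
    Fin.insertNth_apply_succAbove]
  ring

end InsertPair

/-- The words over the alphabet `α`, with positions indexed by `ι`, in which every letter occurs an
even number of times. The positions form an arbitrary finite type, so that the vertices of the
edges of a hypergraph can be listed as a word indexed by pairs. -/
def evenWords (ι α : Type*) [Fintype ι] [DecidableEq ι] [Fintype α] [DecidableEq α] :
    Finset (ι → α) :=
  {w | ∀ a, Even #{p | w p = a}}

section EvenWords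

variable {ι κ α : Type*} [Fintype ι] [DecidableEq ι] [Fintype κ] [DecidableEq κ]
  [Fintype α] [DecidableEq α]

lemma mem_evenWords {w : ι → α} : w ∈ evenWords ι α ↔ ∀ a, Even #{p | w p = a} := by
  simp [evenWords]

lemma card_evenWords_congr (e : ι ≃ κ) : #(evenWords ι α) = #(evenWords κ α) := by
  refine card_equiv (e.arrowCongr (Equiv.refl α)) fun w => ?_
  simp only [mem_evenWords]
  refine forall_congr' fun a => ?_
  rw [card_equiv e (t := {q | e.arrowCongr (Equiv.refl α) w q = a}) (by simp)]

lemma insertPair_mem_evenWords_iff {m : ℕ} (a : α) (j : Fin (m + 1)) (u : Fin m → α) :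
    insertPair a j u ∈ evenWords (Fin (m + 2)) α ↔ u ∈ evenWords (Fin m) α := by
  simp only [mem_evenWords, card_filter_insertPair_eq, Nat.even_add,
    iff_true_left (even_two_mul _)]

lemma exists_insertPair_eq_of_mem_evenWords {m : ℕ} {w : Fin (m + 2) → α}
    (hw : w ∈ evenWords (Fin (m + 2)) α) : ∃ a j u, insertPair a j u = w := by
  have one_lt_card : 1 < #{p | w p = w 0} := by
    have card_pos : 0 < #{p | w p = w 0} := card_pos.mpr ⟨0, by simp⟩
    obtain ⟨r, hr⟩ := mem_evenWords.mp hw (w 0)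
    omega
  obtain ⟨p, hp, hp0⟩ := exists_mem_ne one_lt_card 0
  obtain ⟨j, rfl⟩ := Fin.exists_succ_eq.mpr hp0
  exact ⟨w 0, j, _, insertPair_removeNth_tail (mem_filter.mp hp).2⟩

variable (ι α)

lemma card_evenWords_fin_add_two_le (m : ℕ) :
    #(evenWords (Fin (m + 2)) α) ≤ Fintype.card α * (m + 1) * #(evenWords (Fin m) α) := by
  have subset_image : evenWords (Fin (m + 2)) α ⊆
      ((univ ×ˢ univ) ×ˢ evenWords (Fin m) α).image fun x => insertPair x.1.1 x.1.2 x.2 := by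
    intro w hw
    obtain ⟨a, j, u, rfl⟩ := exists_insertPair_eq_of_mem_evenWords hw
    exact mem_image.mpr
      ⟨((a, j), u), by simpa using (insertPair_mem_evenWords_iff a j u).mp hw, rfl⟩
  calc #(evenWords (Fin (m + 2)) α)
      ≤ #((univ ×ˢ univ : Finset (α × Fin (m + 1))) ×ˢ evenWords (Fin m) α) :=
        (card_le_card subset_image).trans card_image_le
    _ = Fintype.card α * (m + 1) * #(evenWords (Fin m) α) := by
        rw [card_product, card_product, card_univ, card_univ, Fintype.card_fin]

lemma card_evenWords_fin_sq_le (m : ℕ) :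
    #(evenWords (Fin m) α) ^ 2 ≤ (Fintype.card α * m) ^ m := by
  induction m using Nat.twoStepInduction with
  | zero => simpa using card_le_univ (evenWords (Fin 0) α)
  | one =>
    have eq_empty : evenWords (Fin 1) α = ∅ := by
      refine eq_empty_of_forall_notMem fun w hw => ?_
      simpa [Subsingleton.elim _ (0 : Fin 1)] using mem_evenWords.mp hw (w 0)
    simp [eq_empty]
  | more m ih _ =>
    calc #(evenWords (Fin (m + 2)) α) ^ 2
        ≤ (Fintype.card α * (m + 1) * #(evenWords (Fin m) α)) ^ 2 := by
          gcongr
          exact card_evenWords_fin_add_two_le α m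
      _ = (Fintype.card α * (m + 1)) ^ 2 * #(evenWords (Fin m) α) ^ 2 := mul_pow _ _ _
      _ ≤ (Fintype.card α * (m + 1)) ^ 2 * (Fintype.card α * m) ^ m := by gcongr
      _ ≤ (Fintype.card α * (m + 2)) ^ 2 * (Fintype.card α * (m + 2)) ^ m := by
          gcongr <;> omega
      _ = (Fintype.card α * (m + 2)) ^ (m + 2) := by rw [← pow_add, add_comm]

lemma card_evenWords_sq_le :
    #(evenWords ι α) ^ 2 ≤ (Fintype.card α * Fintype.card ι) ^ Fintype.card ι := by
  rw [card_evenWords_congr (Fintype.equivFin ι)]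
  exact card_evenWords_fin_sq_le α _

end EvenWords

/-- An ordering of the edges of a hypergraph `S` by `Fin t`, together with an ordering of the
vertices of each edge by `Fin k`. It is empty unless `S` has `t` edges, each with `k` vertices. -/
abbrev HypergraphOrdering {V : Type*} (S : Finset (Finset V)) (t k : ℕ) : Type _ :=
  Σ e : Fin t ≃ S, ∀ j, Fin k ≃ (e j : Finset V)

namespace HypergraphOrdering

variable {V : Type*} {S T : Finset (Finset V)} {t k : ℕ}

lemma card_eq (hS : #S = t) (hk : ∀ α ∈ S, #α = k) :
    Nat.card (HypergraphOrdering S t k) = t.factorial * k.factorial ^ t := by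
  classical
  have card_vertex_orderings (e : Fin t ≃ S) :
      Nat.card (∀ j, Fin k ≃ (e j : Finset V)) = k.factorial ^ t := by
    have card_equiv_edge (j : Fin t) : Nat.card (Fin k ≃ (e j : Finset V)) = k.factorial := by
      rw [Nat.card_eq_fintype_card,
        Fintype.card_equiv (equivFinOfCardEq (hk _ (e j).2)).symm, Fintype.card_fin]
    simp only [Nat.card_pi, card_equiv_edge, prod_const, card_univ, Fintype.card_fin]
  simp only [Nat.card_sigma, card_vertex_orderings, sum_const, card_univ,
    Fintype.card_equiv (equivFinOfCardEq hS).symm, Fintype.card_fin, smul_eq_mul]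

/-- The word listing the vertices of the edges of a hypergraph, edge by edge, in the order
prescribed by `σ`. -/
def word (σ : HypergraphOrdering S t k) (p : Fin t × Fin k) : V := σ.2 p.1 p.2

lemma mem_edge_iff (σ : HypergraphOrdering S t k) {j : Fin t} {v : V} :
    v ∈ (σ.1 j : Finset V) ↔ ∃ l, σ.word (j, l) = v := by
  refine ⟨fun hv => ?_, ?_⟩
  · obtain ⟨l, hl⟩ := (σ.2 j).surjective ⟨v, hv⟩
    exact ⟨l, congrArg Subtype.val hl⟩
  · rintro ⟨l, rfl⟩
    exact (σ.2 j l).2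

lemma mem_iff_exists_edge_eq (σ : HypergraphOrdering S t k) {α : Finset V} :
    α ∈ S ↔ ∃ j, (σ.1 j : Finset V) = α := by
  refine ⟨fun hα => ?_, ?_⟩
  · obtain ⟨j, hj⟩ := σ.1.surjective ⟨α, hα⟩
    exact ⟨j, congrArg Subtype.val hj⟩
  · rintro ⟨j, rfl⟩
    exact (σ.1 j).2

lemma edge_eq_of_word_eq {σ : HypergraphOrdering S t k} {τ : HypergraphOrdering T t k}
    (h : σ.word = τ.word) (j : Fin t) : (σ.1 j : Finset V) = τ.1 j := by
  ext v
  rw [mem_edge_iff, mem_edge_iff, h]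

lemma hypergraph_eq_of_word_eq {σ : HypergraphOrdering S t k} {τ : HypergraphOrdering T t k}
    (h : σ.word = τ.word) : S = T := by
  ext α
  simp only [σ.mem_iff_exists_edge_eq, τ.mem_iff_exists_edge_eq, edge_eq_of_word_eq h]

lemma word_injective : Function.Injective (word : HypergraphOrdering S t k → _) := by
  rintro ⟨e, c⟩ ⟨e', c'⟩ h
  obtain rfl : e = e' := Equiv.ext fun j => Subtype.ext (edge_eq_of_word_eq h j)
  obtain rfl : c = c' := funext fun j => Equiv.ext fun l => Subtype.ext (congrFun h (j, l))
  rfl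

lemma card_filter_word_eq [DecidableEq V] (σ : HypergraphOrdering S t k) (v : V) :
    #{p | σ.word p = v} = #{α ∈ S | v ∈ α} := by
  refine card_bij (fun p _ => (σ.1 p.1 : Finset V)) ?_ ?_ ?_
  · rintro ⟨j, l⟩ hp
    exact mem_filter.mpr ⟨(σ.1 j).2, σ.mem_edge_iff.mpr ⟨l, (mem_filter.mp hp).2⟩⟩
  · rintro ⟨j, l⟩ hp ⟨j', l'⟩ hp' h
    obtain rfl : j = j' := σ.1.injective (Subtype.ext h)
    have word_eq : σ.word (j, l) = σ.word (j, l') :=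
      (mem_filter.mp hp).2.trans (mem_filter.mp hp').2.symm
    exact congrArg (Prod.mk j) ((σ.2 j).injective (Subtype.ext word_eq))
  · intro α hα
    obtain ⟨hαS, hv⟩ := mem_filter.mp hα
    obtain ⟨j, rfl⟩ := σ.mem_iff_exists_edge_eq.mp hαS
    obtain ⟨l, hl⟩ := σ.mem_edge_iff.mp hv
    exact ⟨(j, l), by simp [hl], rfl⟩

lemma word_mem_evenWords_iff [Fintype V] [DecidableEq V] (σ : HypergraphOrdering S t k) :
    σ.word ∈ evenWords (Fin t × Fin k) V ↔ ∀ v, Even #{α ∈ S | v ∈ α} := by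
  simp only [mem_evenWords, card_filter_word_eq]

end HypergraphOrdering

lemma Ncount_mul_factorial_le_card_evenWords (n k t : ℕ) :
    Ncount n k t * (t.factorial * k.factorial ^ t) ≤
      #(evenWords (Fin t × Fin k) (Fin n)) := by
  let H := {S : Finset (Finset (Fin n)) //
    (∀ α ∈ S, #α = k) ∧ #S = t ∧ ∀ i, Even #{α ∈ S | i ∈ α}}
  let toEvenWord (σ : Σ S : H, HypergraphOrdering S.1 t k) :
      evenWords (Fin t × Fin k) (Fin n) :=
    ⟨σ.2.word, σ.2.word_mem_evenWords_iff.mpr σ.1.2.2.2⟩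
  have toEvenWord_injective : Function.Injective toEvenWord := by
    rintro ⟨⟨S, hS⟩, σ⟩ ⟨⟨T, hT⟩, τ⟩ h
    have word_eq : σ.word = τ.word := congrArg Subtype.val h
    obtain rfl := HypergraphOrdering.hypergraph_eq_of_word_eq word_eq
    obtain rfl := HypergraphOrdering.word_injective word_eq
    rfl
  calc Ncount n k t * (t.factorial * k.factorial ^ t)
      = Nat.card (Σ S : H, HypergraphOrdering S.1 t k) := by
        have card_orderings (S : H) := HypergraphOrdering.card_eq S.2.2.1 S.2.1
        simp only [Nat.card_sigma, card_orderings, sum_const, card_univ, smul_eq_mul,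
          ← Nat.card_eq_fintype_card]
        rfl
    _ ≤ Nat.card (evenWords (Fin t × Fin k) (Fin n)) :=
        Nat.card_le_card_of_injective toEvenWord toEvenWord_injective
    _ = #(evenWords (Fin t × Fin k) (Fin n)) := Nat.card_eq_finsetCard _

lemma Ncount_mul_factorial_le_rpow (n k t : ℕ) :
    (Ncount n k t : ℝ) * (t.factorial * k.factorial ^ t) ≤
      (((n : ℝ) * t * k) ^ ((k : ℝ) / 2)) ^ t := by
  have sq_le : (Ncount n k t * (t.factorial * k.factorial ^ t)) ^ 2 ≤ (n * (t * k)) ^ (t * k) := by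
    simpa only [Fintype.card_prod, Fintype.card_fin] using
      (Nat.pow_le_pow_left (Ncount_mul_factorial_le_card_evenWords n k t) 2).trans
        (card_evenWords_sq_le (Fin t × Fin k) (Fin n))
  have rpow_half_sq : (((n : ℝ) * t * k) ^ ((k : ℝ) / 2)) ^ 2 = ((n : ℝ) * t * k) ^ k := by
    rw [← Real.rpow_mul_natCast (by positivity), Nat.cast_ofNat, div_mul_cancel₀ _ two_ne_zero,
      Real.rpow_natCast]
  refine le_of_sq_le_sq ?_ (by positivity)
  calc ((Ncount n k t : ℝ) * (t.factorial * k.factorial ^ t)) ^ 2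
      ≤ ((n : ℝ) * (t * k)) ^ (t * k) := by exact_mod_cast sq_le
    _ = ((((n : ℝ) * t * k) ^ ((k : ℝ) / 2)) ^ t) ^ 2 := by
        rw [pow_right_comm, rpow_half_sq, ← pow_mul, mul_comm k t, mul_assoc (n : ℝ)]

lemma pow_self_le_exp_one_pow_mul_factorial (t : ℕ) :
    (t : ℝ) ^ t ≤ Real.exp 1 ^ t * t.factorial := by
  rw [← Real.exp_nat_mul, mul_one, ← div_le_iff₀ (by positivity)]
  exact Real.pow_div_factorial_le_exp _ t.cast_nonneg t

lemma Ncount_mul_pow_le (n k t : ℕ) :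
    (Ncount n k t : ℝ) * ((t : ℝ) * k.factorial) ^ t ≤
      (Real.exp 1 * ((n : ℝ) * t * k) ^ ((k : ℝ) / 2)) ^ t :=
  calc (Ncount n k t : ℝ) * ((t : ℝ) * k.factorial) ^ t
      = Ncount n k t * ((t : ℝ) ^ t * k.factorial ^ t) := by rw [mul_pow]
    _ ≤ Ncount n k t * (Real.exp 1 ^ t * t.factorial * k.factorial ^ t) := by
        gcongr
        exact pow_self_le_exp_one_pow_mul_factorial t
    _ = Real.exp 1 ^ t * (Ncount n k t * (t.factorial * k.factorial ^ t)) := by ring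
    _ ≤ Real.exp 1 ^ t * (((n : ℝ) * t * k) ^ ((k : ℝ) / 2)) ^ t := by
        gcongr
        exact Ncount_mul_factorial_le_rpow n k t
    _ = (Real.exp 1 * ((n : ℝ) * t * k) ^ ((k : ℝ) / 2)) ^ t := (mul_pow _ _ _).symm

lemma Ck_nonneg (k : ℕ) : 0 ≤ Ck k := by
  unfold Ck
  positivity

lemma exp_one_mul_rpow_le_Ck_mul_factorial {k : ℕ} (hk : 1 ≤ k) :
    Real.exp 1 * (k : ℝ) ^ ((k : ℝ) / 2) ≤ Ck k * k.factorial := by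
  have exp_le : Real.exp 1 ≤ Real.exp ((k : ℝ) / 2 + 2) :=
    Real.exp_le_exp.mpr (by linarith [k.cast_nonneg (α := ℝ)])
  have rpow_le : (k : ℝ) ^ ((k : ℝ) / 2) ≤ (k : ℝ) ^ (((k : ℝ) + 1) / 2) :=
    Real.rpow_le_rpow_of_exponent_le (by exact_mod_cast hk) (by linarith)
  rw [Ck, div_mul_cancel₀ _ (by positivity)]
  gcongr

lemma exp_one_mul_rpow_le_Ck_mul {k t : ℕ} (n : ℕ) (hk : 1 ≤ k) (ht : t ≠ 0) :
    Real.exp 1 * ((n : ℝ) * t * k) ^ ((k : ℝ) / 2) ≤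
      Ck k * (n : ℝ) ^ ((k : ℝ) / 2) * (t : ℝ) ^ ((k : ℝ) / 2 - 1) * (t * k.factorial) := by
  have rpow_sub_one_mul : (t : ℝ) ^ ((k : ℝ) / 2 - 1) * t = (t : ℝ) ^ ((k : ℝ) / 2) := by
    rw [Real.rpow_sub_one (by exact_mod_cast ht), div_mul_cancel₀ _ (by exact_mod_cast ht)]
  calc Real.exp 1 * ((n : ℝ) * t * k) ^ ((k : ℝ) / 2)
      = Real.exp 1 * (k : ℝ) ^ ((k : ℝ) / 2) *
          ((n : ℝ) ^ ((k : ℝ) / 2) * (t : ℝ) ^ ((k : ℝ) / 2)) := by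
        rw [Real.mul_rpow (by positivity) (by positivity),
          Real.mul_rpow (by positivity) (by positivity)]
        ring
    _ ≤ Ck k * k.factorial * ((n : ℝ) ^ ((k : ℝ) / 2) * (t : ℝ) ^ ((k : ℝ) / 2)) :=
        mul_le_mul_of_nonneg_right (exp_one_mul_rpow_le_Ck_mul_factorial hk) (by positivity)
    _ = _ := by
        rw [← rpow_sub_one_mul]
        ring

lemma Ncount_le_pow {k : ℕ} (n t : ℕ) (hk : 1 ≤ k) :
    (Ncount n k t : ℝ) ≤
      (Ck k * (n : ℝ) ^ ((k : ℝ) / 2) * (t : ℝ) ^ ((k : ℝ) / 2 - 1)) ^ t := by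
  rcases eq_or_ne t 0 with rfl | ht
  · simpa using Ncount_mul_pow_le n k 0
  · refine le_of_mul_le_mul_right ?_ (by positivity : 0 < ((t : ℝ) * k.factorial) ^ t)
    rw [← mul_pow]
    exact (Ncount_mul_pow_le n k t).trans
      (pow_le_pow_left₀ (by positivity) (exp_one_mul_rpow_le_Ck_mul n hk ht) t)

lemma sum_range_succ_pow_eq_one_add_sum_Icc {R : Type*} [Semiring R] (a : ℕ → R) (D : ℕ) :
    ∑ t ∈ range (D + 1), a t ^ t = 1 + ∑ t ∈ Icc 1 D, a t ^ t := by
  rw [range_eq_Ico, sum_eq_sum_Ico_succ_bot D.succ_pos, pow_zero]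
  rfl

lemma sum_Ncount_mul_pow_le {k : ℕ} (hk : 1 ≤ k) (n D : ℕ) {y : ℝ} (hy : 0 ≤ y) :
    ∑ t ∈ range (D + 1), (Ncount n k t : ℝ) * y ^ t ≤
      ∑ t ∈ range (D + 1),
        (Ck k * (n : ℝ) ^ ((k : ℝ) / 2) * (t : ℝ) ^ ((k : ℝ) / 2 - 1) * y) ^ t := by
  refine sum_le_sum fun t _ => ?_
  rw [mul_pow _ y]
  gcongr
  exact Ncount_le_pow n t hk

theorem stmt13_general (k : ℕ) (hk : 2 ≤ k) (n D : ℕ) (y : ℝ) (hy : 0 ≤ y) :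
    (∑ t ∈ range (D + 1), (Ncount n k t : ℝ) * y ^ t
        ≤ 1 + ∑ t ∈ Icc 1 D,
            (Ck k * (n : ℝ) ^ ((k : ℝ) / 2) * (t : ℝ) ^ ((k : ℝ) / 2 - 1) * y) ^ t) ∧
    (Ck k * (n : ℝ) ^ ((k : ℝ) / 2) * (D : ℝ) ^ ((k : ℝ) / 2 - 1) * y < 1 →
      ∑ t ∈ range (D + 1), (Ncount n k t : ℝ) * y ^ t
        ≤ 1 / (1 - Ck k * (n : ℝ) ^ ((k : ℝ) / 2) * (D : ℝ) ^ ((k : ℝ) / 2 - 1) * y)) := by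
  have sum_le := sum_Ncount_mul_pow_le (one_le_two.trans hk) n D hy
  refine ⟨sum_le.trans_eq (sum_range_succ_pow_eq_one_add_sum_Icc _ D), fun hq => ?_⟩
  have hC := Ck_nonneg k
  have exponent_nonneg : 0 ≤ (k : ℝ) / 2 - 1 := by
    have : (2 : ℝ) ≤ k := by exact_mod_cast hk
    linarith
  set q := Ck k * (n : ℝ) ^ ((k : ℝ) / 2) * (D : ℝ) ^ ((k : ℝ) / 2 - 1) * y with q_def
  have hq0 : 0 ≤ q := by positivity
  calc ∑ t ∈ range (D + 1), (Ncount n k t : ℝ) * y ^ t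
      ≤ ∑ t ∈ range (D + 1),
          (Ck k * (n : ℝ) ^ ((k : ℝ) / 2) * (t : ℝ) ^ ((k : ℝ) / 2 - 1) * y) ^ t := sum_le
    _ ≤ ∑ t ∈ range (D + 1), q ^ t := by
        rw [q_def]
        gcongr with t ht
        exact mem_range_succ_iff.mp ht
    _ ≤ 1 / (1 - q) := by
        simpa only [range_eq_Ico, pow_zero] using
          geom_sum_Ico_le_of_lt_one (m := 0) (n := D + 1) hq0 hq

/-- For `k ≥ 3`, `1 ≤ D ≤ n/k` and `y ≥ 0`,
`Σ_{t=0}^{D} N_t y^t ≤ 1 + Σ_{t=1}^{D} (C_k n^{k/2} t^{k/2−1} y)^t`; moreover, if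
`q = C_k n^{k/2} D^{k/2−1} y < 1`, then `Σ_{t=0}^{D} N_t y^t ≤ 1/(1−q)`. -/
theorem stmt13 (k : ℕ) (hk : 3 ≤ k) (n D : ℕ) (hn : 1 ≤ n) (hD : 1 ≤ D)
    (hDn : (D : ℝ) ≤ (n : ℝ) / (k : ℝ)) (y : ℝ) (hy : 0 ≤ y) :
    (∑ t ∈ Finset.range (D + 1), (Ncount n k t : ℝ) * y ^ t
        ≤ 1 + ∑ t ∈ Finset.Icc 1 D,
            (Ck k * (n : ℝ) ^ ((k : ℝ) / 2) * (t : ℝ) ^ ((k : ℝ) / 2 - 1) * y) ^ t) ∧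
    (Ck k * (n : ℝ) ^ ((k : ℝ) / 2) * (D : ℝ) ^ ((k : ℝ) / 2 - 1) * y < 1 →
      ∑ t ∈ Finset.range (D + 1), (Ncount n k t : ℝ) * y ^ t
        ≤ 1 / (1 - Ck k * (n : ℝ) ^ ((k : ℝ) / 2) * (D : ℝ) ^ ((k : ℝ) / 2 - 1) * y)) :=
  stmt13_general k (by omega) n D y hy
end

section
/- Fix k ≥ 3 and set C_k := e^{k/2+2} · k^{(k+1)/2} / k!. For each n, let D(n) ≥ 1 be an integer, δ(n) ∈ (0,1], and m(n) ≤ binom(n,k) a positive integer; set p(n) := m(n)/binom(n,k). Let Q_n be the null model and P_n the mixture planted Bernoulli model on z ∈ {0,±1}^{binom([n],k)}. If m(n)·δ(n)²·C_k·D(n)^{k/2−1} / n^{k/2} → 0 as n → ∞, then for every sequence f_n of real polynomials in the coordinates (z(α)) of total degree at most D(n) with Var_{Q_n}(f_n) > 0, one has (E_{P_n}[f_n] − E_{Q_n}[f_n]) / sqrt(Var_{Q_n}(f_n)) → 0 as n → ∞. Moreover, if D(n) = D is a fixed constant and m(n)·δ(n)²·C_k·D^{k/2−1} / n^{k/2}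 is bounded above by a constant, then the quantity (E_{P_n}[f_n] − E_{Q_n}[f_n]) / sqrt(Var_{Q_n}(f_n)) is bounded uniformly over n and over all such polynomial sequences. -/
open Finset

/-- Expectation under the mixture planted model `P`: average of `E_{P_x}` over a uniformly
random hidden assignment `x ∈ {±1}^n`. -/
noncomputable def expMix (n k : ℕ) (p δ : ℝ) (F : (KSet n k → ℝ) → ℝ) : ℝ :=
  ((2 : ℝ) ^ n)⁻¹ *
    ∑ b : Fin n → Bool, expP n k p δ (fun i => if b i then 1 else -1) F

/-- The variance of a polynomial test `f` in the coordinates of `z` under the null model. -/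
noncomputable def varQ (n k : ℕ) (p : ℝ) (f : MvPolynomial (KSet n k) ℝ) : ℝ :=
  expQ n k p (fun z => (MvPolynomial.eval z f) ^ 2)
    - (expQ n k p (fun z => MvPolynomial.eval z f)) ^ 2

/-!
Write `p` for the density of observed coordinates, and call a set `S` of `k`-subsets of `[n]` even
if every vertex lies in an even number of its members. The likelihood ratio of the planted model to
the null model is `∏ (1 + δ x_α z_α)`, so averaging over `x` leaves only the even `S` in its
expansion into the monomials `∏_{α ∈ S} z_α`, which are orthogonal under the null model with
squared norm `p ^ |S|`. Polynomials of degree at most `D` only see the `S` with `|S| ≤ D`, and by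
Cauchy-Schwarz the squared advantage is at most the sum of `(δ² p) ^ |S|` over the even `S` with
`1 ≤ |S| ≤ D`.

Even sets are counted by moments of a sum of independent signs: every monomial in the `x_i` has
nonnegative mean, hence `d!` times the number of even `S` with `|S| = d` is at most
`E[(∑ x_i) ^ (k d)] ≤ 2 (k d n / e) ^ (k d / 2)`, the last step by the exponential moment method. As
`d! ≥ (d / e) ^ d` and `p` is of order `m / n ^ k`, the terms with `|S| = d` contribute at most
`2 r ^ d`, where `r` is a constant multiple of `m δ² C_k D ^ (k / 2 - 1) / n ^ (k / 2)`.
-/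

open scoped BigOperators

section MixedMoments

variable {Ω A B : Type*} [Fintype Ω]

/-- The mixed moment `E[∏_{a ∈ S} y_a]` of a family `y` of random variables on the finite set `Ω`
with its uniform distribution. For the planted signs `x_α` it is the indicator of the hypergraph
`S` being even, i.e. of every vertex having even degree in `S`. -/
noncomputable def mixedMoment (y : Ω → A → ℝ) (S : Finset A) : ℝ := 𝔼 ω, ∏ a ∈ S, y ω a

theorem mixedMoment_empty [Nonempty Ω] (y : Ω → A → ℝ) : mixedMoment y ∅ = 1 := by
  simp [mixedMoment]

theorem sum_mixedMoment_comp_le [Fintype A] [Fintype B] (g : A ↪ B) (y : Ω → B → ℝ)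
    (hy : ∀ T, 0 ≤ mixedMoment y T) (d : ℕ) :
    ∑ S ∈ powersetCard d univ, mixedMoment (fun ω a => y ω (g a)) S
      ≤ ∑ T ∈ powersetCard d univ, mixedMoment y T :=
  calc ∑ S ∈ powersetCard d univ, mixedMoment (fun ω a => y ω (g a)) S
      = ∑ T ∈ powersetCard d (univ.map g), mixedMoment y T := by
        simp [powersetCard_map, sum_map, mixedMoment]
    _ ≤ ∑ T ∈ powersetCard d univ, mixedMoment y T :=
        sum_le_sum_of_subset_of_nonneg (powersetCard_mono (subset_univ _)) fun T _ _ => hy T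

theorem multinomial_indicator [Fintype A] [DecidableEq A] (S : Finset A) :
    Nat.multinomial univ (fun a => if a ∈ S then 1 else 0) = (#S).factorial := by
  have h := Nat.multinomial_spec univ fun a => if a ∈ S then 1 else 0
  simpa [apply_ite Nat.factorial] using h

-- In the multinomial expansion of `(∑ y_a) ^ d`, the squarefree monomials have coefficient `d!`.
theorem factorial_mul_sum_mixedMoment_le [Fintype A] (y : Ω → A → ℝ)
    (hy : ∀ e : A → ℕ, 0 ≤ 𝔼 ω, ∏ a, y ω a ^ e a) (d : ℕ) :
    d.factorial * ∑ S ∈ powersetCard d univ, mixedMoment y S ≤ 𝔼 ω, (∑ a, y ω a) ^ d := by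
  classical
  let ind (S : Finset A) (a : A) : ℕ := if a ∈ S then 1 else 0
  let c (e : A → ℕ) : ℝ := Nat.multinomial univ e * 𝔼 ω, ∏ a, y ω a ^ e a
  have hc (e : A → ℕ) : 0 ≤ c e := mul_nonneg (Nat.cast_nonneg _) (hy e)
  have ind_injective : Function.Injective ind := fun S T h => by
    ext a
    have := congrFun h a
    grind
  have ind_mem : (powersetCard d univ).image ind ⊆ piAntidiag univ d := by
    intro e he
    obtain ⟨S, hS, rfl⟩ := mem_image.1 he
    simp [ind, (mem_powersetCard.1 hS).2]
  calc d.factorial * ∑ S ∈ powersetCard d univ, mixedMoment y S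
      = ∑ S ∈ powersetCard d univ, c (ind S) := by
        rw [mul_sum]
        refine sum_congr rfl fun S hS => ?_
        have hprod (ω : Ω) : ∏ a, y ω a ^ ind S a = ∏ a ∈ S, y ω a := by
          simp [ind, pow_ite, prod_ite_mem]
        simp only [c, hprod, ind, multinomial_indicator, (mem_powersetCard.1 hS).2, mixedMoment]
    _ = ∑ e ∈ (powersetCard d univ).image ind, c e := (sum_image ind_injective.injOn).symm
    _ ≤ ∑ e ∈ piAntidiag univ d, c e :=
        sum_le_sum_of_subset_of_nonneg ind_mem fun e _ _ => hc e
    _ = 𝔼 ω, (∑ a, y ω a) ^ d := by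
        simp only [c, sum_pow_eq_sum_piAntidiag, expect_sum_comm, mul_expect]

end MixedMoments

section RandomSigns

variable {ι κ : Type*}

/-- The vector of signs in `{±1}` encoded by a Boolean vector. -/
def signVec (b : ι → Bool) (i : ι) : ℝ := if b i then 1 else -1

theorem signVec_eq_or (b : ι → Bool) (i : ι) : signVec b i = 1 ∨ signVec b i = -1 := by
  unfold signVec
  split <;> simp

variable [Fintype ι] [DecidableEq ι]

theorem expect_prod_signVec (g : ι → ℝ → ℝ) :
    𝔼 b : ι → Bool, ∏ i, g i (signVec b i) = ∏ i, (g i 1 + g i (-1)) / 2 := by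
  have h := prod_univ_sum (fun _ : ι => (univ : Finset Bool)) fun i c => g i (if c then 1 else -1)
  simp only [Fintype.piFinset_univ, Fintype.sum_bool] at h
  simp only [Fintype.expect_eq_sum_div_card, prod_div_distrib]
  simpa [signVec] using h.symm

theorem expect_prod_signVec_pow_nonneg (s : Finset κ) (q : κ → ι) (e : κ → ℕ) :
    0 ≤ 𝔼 b : ι → Bool, ∏ j ∈ s, signVec b (q j) ^ e j := by
  have hcollect (b : ι → Bool) : ∏ j ∈ s, signVec b (q j) ^ e j
      = ∏ i, signVec b i ^ ∑ j ∈ s with q j = i, e j := by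
    rw [← prod_fiberwise s q]
    refine prod_congr rfl fun i _ => ?_
    rw [← prod_pow_eq_pow_sum]
    exact prod_congr rfl fun j hj => by rw [(mem_filter.1 hj).2]
  simp only [hcollect]
  rw [expect_prod_signVec fun i t => t ^ ∑ j ∈ s with q j = i, e j]
  refine prod_nonneg fun i _ => ?_
  rcases neg_one_pow_eq_or ℝ (∑ j ∈ s with q j = i, e j) with h | h <;> simp [h]

theorem expect_exp_mul_sum_signVec_le (t : ℝ) :
    𝔼 b : ι → Bool, Real.exp (t * ∑ i, signVec b i)
      ≤ Real.exp (Fintype.card ι * (t ^ 2 / 2)) := by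
  have h := expect_prod_signVec fun (_ : ι) r => Real.exp (t * r)
  simp only [← Real.exp_sum, ← mul_sum, mul_one, mul_neg, ← Real.cosh_eq, prod_const,
    card_univ] at h
  rw [h, Real.exp_nat_mul]
  exact pow_le_pow_left₀ (Real.cosh_pos t).le (Real.cosh_le_exp_half_sq t) _

end RandomSigns

-- This is `u ≤ exp (u - 1)` at `u = t * |x| / s`.
theorem pow_le_mul_exp_add_exp_neg (s : ℕ) {t : ℝ} (ht : 0 < t) (x : ℝ) :
    x ^ s ≤ (s / (Real.exp 1 * t)) ^ s * (Real.exp (t * x) + Real.exp (-t * x)) := by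
  rcases s.eq_zero_or_pos with rfl | hs
  · have := Real.add_one_le_exp (t * x)
    have := Real.add_one_le_exp (-t * x)
    simp only [pow_zero, one_mul]
    linarith
  have hs' : (0 : ℝ) < s := by exact_mod_cast hs
  have habs : |x| ≤ s / (Real.exp 1 * t) * Real.exp (t * |x| / s) := by
    have h := Real.add_one_le_exp (t * |x| / s - 1)
    rw [sub_add_cancel, Real.exp_sub] at h
    calc |x| = s / t * (t * |x| / s) := by field_simp
      _ ≤ s / t * (Real.exp (t * |x| / s) / Real.exp 1) := by gcongr
      _ = _ := by field_simp
  have hexp : Real.exp (t * |x|) ≤ Real.exp (t * x) + Real.exp (-t * x) := by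
    rcases abs_choice x with h | h <;> rw [h]
    · exact le_add_of_nonneg_right (Real.exp_pos _).le
    · rw [mul_neg, neg_mul]
      exact le_add_of_nonneg_left (Real.exp_pos _).le
  calc x ^ s ≤ |x| ^ s := (le_abs_self _).trans_eq (abs_pow x s)
    _ ≤ (s / (Real.exp 1 * t) * Real.exp (t * |x| / s)) ^ s := by gcongr
    _ = (s / (Real.exp 1 * t)) ^ s * Real.exp (t * |x|) := by
        rw [mul_pow, ← Real.exp_nat_mul, mul_div_cancel₀ _ hs'.ne']
    _ ≤ _ := by gcongr

theorem expect_sum_signVec_pow_le {ι : Type*} [Fintype ι] [DecidableEq ι] [Nonempty ι] {s : ℕ}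
    (hs : 0 < s) :
    𝔼 b : ι → Bool, (∑ i, signVec b i) ^ s
      ≤ 2 * √(s * Fintype.card ι / Real.exp 1) ^ s := by
  set n := (Fintype.card ι : ℝ)
  have hn : 0 < n := by positivity
  have : (0 : ℝ) < s := by exact_mod_cast hs
  -- `t = √(s / n)` minimises the bound `2 * (s / (e * t)) ^ s * exp (n * t ^ 2 / 2)`.
  obtain ⟨t, ht, ht2⟩ : ∃ t : ℝ, 0 < t ∧ t ^ 2 = s / n :=
    ⟨√(s / n), by positivity, Real.sq_sqrt (by positivity)⟩
  have hroot : √(s * n / Real.exp 1) = s / (Real.exp 1 * t) * Real.exp (1 / 2) := by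
    have hhalf : Real.exp (1 / 2) ^ 2 = Real.exp 1 := by rw [← Real.exp_nat_mul]; norm_num
    rw [Real.sqrt_eq_iff_eq_sq (by positivity) (by positivity), mul_pow, div_pow, mul_pow, hhalf,
      ht2]
    field_simp
  calc 𝔼 b : ι → Bool, (∑ i, signVec b i) ^ s
      ≤ 𝔼 b : ι → Bool, (s / (Real.exp 1 * t)) ^ s *
          (Real.exp (t * ∑ i, signVec b i) + Real.exp (-t * ∑ i, signVec b i)) :=
        expect_le_expect fun b _ => pow_le_mul_exp_add_exp_neg s ht _
    _ = (s / (Real.exp 1 * t)) ^ s * (𝔼 b : ι → Bool, Real.exp (t * ∑ i, signVec b i)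
          + 𝔼 b : ι → Bool, Real.exp (-t * ∑ i, signVec b i)) := by
        rw [← mul_expect, expect_add_distrib]
    _ ≤ (s / (Real.exp 1 * t)) ^ s * (Real.exp (n * (t ^ 2 / 2))
          + Real.exp (n * ((-t) ^ 2 / 2))) := by
        gcongr <;> exact expect_exp_mul_sum_signVec_le _
    _ = 2 * (s / (Real.exp 1 * t) * Real.exp (1 / 2)) ^ s := by
        rw [neg_sq, ht2, mul_pow, ← Real.exp_nat_mul,
          show n * (s / n / 2) = s * (1 / 2) by field_simp]
        ring
    _ = _ := by rw [hroot]


section EvenHypergraphs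

variable {n k : ℕ}

/-- The planted signs `x_α = ∏_{i ∈ α} x_i`, where `x` is the sign vector encoded by `b`. -/
def kParity (b : Fin n → Bool) (α : KSet n k) : ℝ := ∏ i ∈ α.1, signVec b i

theorem kParity_eq_or (b : Fin n → Bool) (α : KSet n k) : kParity b α = 1 ∨ kParity b α = -1 := by
  refine prod_induction _ (fun t : ℝ => t = 1 ∨ t = -1) ?_ (Or.inl rfl) fun i _ => signVec_eq_or b i
  rintro _ _ (rfl | rfl) (rfl | rfl) <;> simp

theorem mixedMoment_kParity_nonneg (S : Finset (KSet n k)) : 0 ≤ mixedMoment kParity S := by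
  simpa [mixedMoment, kParity, prod_sigma] using
    expect_prod_signVec_pow_nonneg (S.sigma fun α => α.1) (fun j => j.2) fun _ => 1

theorem mixedMoment_kParity_le_one (S : Finset (KSet n k)) : mixedMoment kParity S ≤ 1 := by
  refine expect_le univ_nonempty fun b _ => (le_abs_self _).trans_eq ?_
  refine (abs_prod ..).trans (prod_eq_one fun α _ => ?_)
  rcases kParity_eq_or b α with h | h <;> simp [h]

/-- The increasing enumeration of a `k`-set, as a word of length `k` over `[n]`. It exhibits the
planted signs `x_α` among the monomials in the expansion of `(∑ x_i) ^ k`. -/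
def wordEmbedding (n k : ℕ) : KSet n k ↪ (Fin k → Fin n) where
  toFun α := α.1.orderEmbOfFin α.2
  inj' α β h := Subtype.ext <| by
    rw [← image_orderEmbOfFin_univ α.1 α.2, ← image_orderEmbOfFin_univ β.1 β.2]
    exact congrArg (image · univ) h

theorem kParity_eq_prod_wordEmbedding (b : Fin n → Bool) (α : KSet n k) :
    kParity b α = ∏ j, signVec b (wordEmbedding n k α j) := by
  rw [kParity, ← map_orderEmbOfFin_univ α.1 α.2, prod_map]
  rfl

theorem factorial_mul_sum_mixedMoment_kParity_le (n k d : ℕ) :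
    d.factorial * ∑ S ∈ powersetCard d univ, mixedMoment (kParity (n := n) (k := k)) S
      ≤ 𝔼 b : Fin n → Bool, (∑ i, signVec b i) ^ (k * d) := by
  let y (b : Fin n → Bool) (w : Fin k → Fin n) : ℝ := ∏ j, signVec b (w j)
  have hy (e : (Fin k → Fin n) → ℕ) : 0 ≤ 𝔼 b, ∏ w, y b w ^ e w := by
    simpa [y, ← prod_pow, Fintype.prod_prod_type] using expect_prod_signVec_pow_nonneg univ
      (fun j : (Fin k → Fin n) × Fin k => j.1 j.2) fun j => e j.1
  have hmoment (T : Finset (Fin k → Fin n)) : 0 ≤ mixedMoment y T := by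
    simpa [mixedMoment, pow_ite, prod_ite_mem] using hy fun w => if w ∈ T then 1 else 0
  have hparity : kParity = fun b α => y b (wordEmbedding n k α) :=
    funext fun b => funext fun α => kParity_eq_prod_wordEmbedding b α
  calc d.factorial * ∑ S ∈ powersetCard d univ, mixedMoment (kParity (n := n) (k := k)) S
      ≤ d.factorial * ∑ T ∈ powersetCard d univ, mixedMoment y T := by
        rw [hparity]
        gcongr
        exact sum_mixedMoment_comp_le _ y hmoment d
    _ ≤ 𝔼 b, (∑ w, y b w) ^ d := factorial_mul_sum_mixedMoment_le y hy d
    _ = 𝔼 b : Fin n → Bool, (∑ i, signVec b i) ^ (k * d) := by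
        simp only [y, pow_mul, Fintype.sum_pow]

theorem sum_mixedMoment_kParity_le {d : ℕ} (hn : 0 < n) (hk : 0 < k) (hd : 0 < d) :
    ∑ S ∈ powersetCard d univ, mixedMoment (kParity (n := n) (k := k)) S
      ≤ 2 * (Real.exp 1 / d * √(k * d * n / Real.exp 1) ^ k) ^ d := by
  have : Nonempty (Fin n) := ⟨⟨0, hn⟩⟩
  have hd' : (0 : ℝ) < d := by exact_mod_cast hd
  have hfactorial : (d : ℝ) ^ d / Real.exp 1 ^ d ≤ d.factorial := by
    have h := Real.pow_div_factorial_le_exp (d : ℝ) hd'.le d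
    rw [div_le_iff₀ (by positivity)] at h
    rwa [← Real.exp_nat_mul, mul_one, div_le_iff₀' (by positivity)]
  have hmoment := (factorial_mul_sum_mixedMoment_kParity_le n k d).trans
    (expect_sum_signVec_pow_le (Nat.mul_pos hk hd))
  rw [Fintype.card_fin, Nat.cast_mul, pow_mul] at hmoment
  set N := ∑ S ∈ powersetCard d univ, mixedMoment (kParity (n := n) (k := k)) S
  have hN : 0 ≤ N := sum_nonneg fun S _ => mixedMoment_kParity_nonneg S
  calc N = (Real.exp 1 / d) ^ d * ((d : ℝ) ^ d / Real.exp 1 ^ d * N) := by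
        rw [div_pow]; field_simp
    _ ≤ (Real.exp 1 / d) ^ d * (d.factorial * N) := by gcongr
    _ ≤ (Real.exp 1 / d) ^ d * (2 * (√(k * d * n / Real.exp 1) ^ k) ^ d) := by gcongr
    _ = _ := by rw [mul_pow]; ring

end EvenHypergraphs


section ProductExpectation

variable {A J : Type*}

/-- The monomial `z ↦ ∏_{a ∈ S} z a`; these are orthogonal under the null model. -/
def coordProd (S : Finset A) : (A → ℝ) → ℝ := fun z => ∏ a ∈ S, z a

theorem coordProd_empty : coordProd (∅ : Finset A) = 1 := rfl

variable [Fintype A]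

theorem prod_one_add_mul_eq_sum_coordProd (δ : ℝ) (y : A → ℝ) :
    (fun z : A → ℝ => ∏ a, (1 + δ * y a * z a))
      = ∑ S, (δ ^ #S * ∏ a ∈ S, y a) • coordProd S := by
  ext z
  simp [prod_one_add, prod_mul_distrib, coordProd]

variable [Fintype J] [DecidableEq A]

/-- The expectation functional `F ↦ E[F(z)]` for a random vector `z` with independent coordinates,
where `z a` takes the value `v a j` with weight `w a j`. -/
def prodExp (w v : A → J → ℝ) : ((A → ℝ) → ℝ) →ₗ[ℝ] ℝ where
  toFun F := ∑ ω : A → J, (∏ a, w a (ω a)) * F fun a => v a (ω a)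
  map_add' F G := by simp only [Pi.add_apply, mul_add, sum_add_distrib]
  map_smul' c F := by
    simp only [Pi.smul_apply, smul_eq_mul, RingHom.id_apply, mul_sum, mul_left_comm]

theorem prodExp_apply (w v : A → J → ℝ) (F : (A → ℝ) → ℝ) :
    prodExp w v F = ∑ ω : A → J, (∏ a, w a (ω a)) * F fun a => v a (ω a) := rfl

theorem prodExp_prod (w v : A → J → ℝ) (g : A → ℝ → ℝ) :
    prodExp w v (fun z => ∏ a, g a (z a)) = ∏ a, ∑ j, w a j * g a (v a j) := by
  rw [prod_univ_sum]
  simp [prodExp_apply, prod_mul_distrib]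

theorem sq_prodExp_mul_le {w : A → J → ℝ} (hw : ∀ a j, 0 ≤ w a j) (v : A → J → ℝ)
    (F G : (A → ℝ) → ℝ) :
    prodExp w v (F * G) ^ 2 ≤ prodExp w v (F ^ 2) * prodExp w v (G ^ 2) := by
  have hw' (ω : A → J) : 0 ≤ ∏ a, w a (ω a) := prod_nonneg fun a _ => hw a (ω a)
  refine sum_sq_le_sum_mul_sum_of_sq_le_mul _ (fun ω _ => mul_nonneg (hw' ω) (sq_nonneg _))
    (fun ω _ => mul_nonneg (hw' ω) (sq_nonneg _)) fun ω _ => le_of_eq ?_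
  simp only [Pi.mul_apply, Pi.pow_apply]
  ring

/-- Expectation under the null model on an arbitrary finite set `A` of coordinates; `expQ` is the
case `A = KSet n k`. -/
noncomputable def nullExp (p : ℝ) : ((A → ℝ) → ℝ) →ₗ[ℝ] ℝ :=
  prodExp (fun _ => qWeight p) fun _ => qVal

/-- Expectation under the planted model on an arbitrary finite set `A` of coordinates, where the
coordinate `a` is biased towards the sign `y a`; `expP` is the case `y α = x_α`. -/
noncomputable def plantedExp (p δ : ℝ) (y : A → ℝ) : ((A → ℝ) → ℝ) →ₗ[ℝ] ℝ :=
  prodExp (fun _ => pWeight p δ) fun a => ![0, y a, -y a]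

variable {p δ : ℝ}

theorem nullExp_prod (g : A → ℝ → ℝ) :
    nullExp p (fun z => ∏ a, g a (z a))
      = ∏ a, ((1 - p) * g a 0 + p / 2 * g a 1 + p / 2 * g a (-1)) := by
  simp [nullExp, prodExp_prod, Fin.sum_univ_three, qWeight, qVal]

theorem nullExp_one : nullExp p (1 : (A → ℝ) → ℝ) = 1 :=
  calc nullExp p (1 : (A → ℝ) → ℝ) = nullExp p fun _ => ∏ _a : A, 1 := by
        simp only [prod_const_one]; rfl
    _ = 1 := (nullExp_prod fun _ _ => 1).trans (prod_eq_one fun _ _ => by ring)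

theorem nullExp_coordProd_mul_coordProd (S T : Finset A) :
    nullExp p (coordProd S * coordProd T) = if S = T then p ^ #S else 0 := by
  have hfactor : coordProd S * coordProd T
      = fun z => ∏ a, (if a ∈ S then z a else 1) * (if a ∈ T then z a else 1) := by
    ext z
    simp only [coordProd, Pi.mul_apply, prod_mul_distrib, prod_ite_mem, univ_inter]
  rw [hfactor, nullExp_prod fun a t => (if a ∈ S then t else 1) * (if a ∈ T then t else 1)]
  split_ifs with h
  · subst h
    have hpow : ∏ a, (if a ∈ S then p else 1) = p ^ #S := by
      rw [prod_ite_mem, univ_inter, prod_const]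
    rw [← hpow]
    refine prod_congr rfl fun a _ => ?_
    by_cases ha : a ∈ S
    · simp [ha]
    · simp only [ha, if_false]
      ring
  · obtain ⟨a, ha⟩ : ∃ a, ¬(a ∈ S ↔ a ∈ T) := by
      by_contra! hST
      exact h (Finset.ext hST)
    refine prod_eq_zero (mem_univ a) ?_
    by_cases hS : a ∈ S <;> by_cases hT : a ∈ T <;> simp [hS, hT] at ha ⊢

theorem nullExp_coordProd {S : Finset A} (hS : S ≠ ∅) : nullExp p (coordProd S) = 0 := by
  simpa [coordProd_empty, hS] using nullExp_coordProd_mul_coordProd (p := p) S ∅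

-- A coordinate of `S` missing from a monomial of `f` has mean zero and factors out.
theorem nullExp_coordProd_mul_eval_eq_zero {f : MvPolynomial A ℝ} {S : Finset A}
    (hS : f.totalDegree < #S) : nullExp p (coordProd S * fun z => MvPolynomial.eval z f) = 0 := by
  have hexpand : (coordProd S * fun z => MvPolynomial.eval z f)
      = ∑ e ∈ f.support, f.coeff e •
          fun z => ∏ a, (if a ∈ S then z a else 1) * z a ^ e a := by
    ext z
    simp only [coordProd, MvPolynomial.eval_eq', Pi.mul_apply, Finset.sum_apply, Pi.smul_apply,
      smul_eq_mul, mul_sum, prod_mul_distrib, prod_ite_mem, univ_inter, mul_left_comm]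
  rw [hexpand, map_sum]
  refine sum_eq_zero fun e he => ?_
  have hsupport : #e.support < #S :=
    calc #e.support ≤ e.sum fun _ j => j := by
          rw [Finsupp.sum, card_eq_sum_ones]
          exact sum_le_sum fun a ha => Nat.one_le_iff_ne_zero.2 (Finsupp.mem_support_iff.1 ha)
      _ ≤ f.totalDegree := MvPolynomial.le_totalDegree he
      _ < #S := hS
  obtain ⟨a, haS, hae⟩ := exists_mem_notMem_of_card_lt_card hsupport
  rw [map_smul, nullExp_prod fun a t => (if a ∈ S then t else 1) * t ^ e a,
    prod_eq_zero (mem_univ a), smul_zero]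
  simp [haS, Finsupp.notMem_support_iff.1 hae]

theorem qWeight_nonneg (hp0 : 0 ≤ p) (hp1 : p ≤ 1) (j : Fin 3) : 0 ≤ qWeight p j := by
  have hhalf : 0 ≤ p / 2 := by positivity
  fin_cases j
  exacts [sub_nonneg.2 hp1, hhalf, hhalf]

-- Since `L` is centred, `F` may be centred too before applying Cauchy-Schwarz.
theorem sq_nullExp_mul_le_of_centered (hp0 : 0 ≤ p) (hp1 : p ≤ 1) {L : (A → ℝ) → ℝ}
    (hL : nullExp p L = 0) (F : (A → ℝ) → ℝ) :
    nullExp p (L * F) ^ 2 ≤ nullExp p (L ^ 2) * (nullExp p (F ^ 2) - nullExp p F ^ 2) := by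
  set μ := nullExp p F with hμ
  have hcov : nullExp p (L * (F - μ • 1)) = nullExp p (L * F) := by
    rw [mul_sub, mul_smul_comm, mul_one, map_sub, map_smul, hL, smul_zero, sub_zero]
  have hvar : nullExp p ((F - μ • 1) ^ 2) = nullExp p (F ^ 2) - μ ^ 2 := by
    have hsq : (F - μ • 1) ^ 2 = F ^ 2 - (2 * μ) • F + μ ^ 2 • (1 : (A → ℝ) → ℝ) := by
      ext z
      simp only [Pi.add_apply, Pi.sub_apply, Pi.pow_apply, Pi.smul_apply, Pi.one_apply, smul_eq_mul]
      ring
    rw [hsq, map_add, map_sub, map_smul, map_smul, nullExp_one, ← hμ, smul_eq_mul, smul_eq_mul]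
    ring
  rw [← hcov, ← hvar]
  exact sq_prodExp_mul_le (fun _ => qWeight_nonneg hp0 hp1) _ _ _

-- For `y = -1` the outcomes `+1` and `-1`, which are equally likely under `Q`, are exchanged.
theorem exists_perm_pWeight_eq {y : ℝ} (hy : y = 1 ∨ y = -1) (p δ : ℝ) :
    ∃ σ : Equiv.Perm (Fin 3), ∀ j, ![0, y, -y] j = qVal (σ j) ∧
      pWeight p δ j = qWeight p (σ j) * (1 + δ * y * qVal (σ j)) := by
  rcases hy with rfl | rfl
  · refine ⟨1, fun j => ?_⟩
    fin_cases j <;> simp [qVal, qWeight, pWeight, div_mul_eq_mul_div, sub_eq_add_neg]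
  · refine ⟨Equiv.swap 1 2, fun j => ?_⟩
    fin_cases j <;> simp [qVal, qWeight, pWeight, Equiv.swap_apply_def, div_mul_eq_mul_div,
      sub_eq_add_neg]

theorem plantedExp_eq_nullExp_mul {y : A → ℝ} (hy : ∀ a, y a = 1 ∨ y a = -1)
    (F : (A → ℝ) → ℝ) :
    plantedExp p δ y F = nullExp p ((fun z => ∏ a, (1 + δ * y a * z a)) * F) := by
  choose σ hval hweight using fun a => exists_perm_pWeight_eq (hy a) p δ
  refine Fintype.sum_equiv (Equiv.piCongrRight σ) _ _ fun ω => ?_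
  have hlikelihood : ∏ a, pWeight p δ (ω a)
      = (∏ a, qWeight p (σ a (ω a))) * ∏ a, (1 + δ * y a * qVal (σ a (ω a))) := by
    rw [← prod_mul_distrib]
    exact prod_congr rfl fun a _ => hweight a (ω a)
  rw [hlikelihood, mul_assoc]
  simp only [hval, Equiv.piCongrRight_apply, Pi.map_apply, Pi.mul_apply]

end ProductExpectation

section LowDegreeAdvantage

variable {Ω A : Type*} [Fintype Ω] [Fintype A] [DecidableEq A] {p δ : ℝ} {y : Ω → A → ℝ}

theorem expect_plantedExp_eq_sum (hy : ∀ ω a, y ω a = 1 ∨ y ω a = -1) (F : (A → ℝ) → ℝ) :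
    𝔼 ω, plantedExp p δ (y ω) F
      = ∑ S, δ ^ #S * mixedMoment y S * nullExp p (coordProd S * F) := by
  simp only [plantedExp_eq_nullExp_mul (hy _), prod_one_add_mul_eq_sum_coordProd, sum_mul,
    smul_mul_assoc, map_sum, map_smul, smul_eq_mul, expect_sum_comm, mixedMoment, mul_expect,
    expect_mul]

/-- The projection of `dP/dQ - 1` to polynomials of degree at most `D`, where `P` is the mixture of
the planted models with random signs `y` and `Q` is the null model. The mean shift of a polynomial
of degree at most `D` is its null inner product with this statistic. -/
noncomputable def lowDegreeLikelihood (D : ℕ) (δ : ℝ) (y : Ω → A → ℝ) : (A → ℝ) → ℝ :=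
  ∑ S with #S ∈ Icc 1 D, (δ ^ #S * mixedMoment y S) • coordProd S

theorem nullExp_lowDegreeLikelihood (D : ℕ) :
    nullExp p (lowDegreeLikelihood D δ y) = 0 := by
  rw [lowDegreeLikelihood, map_sum]
  refine sum_eq_zero fun S hS => ?_
  have hS : S ≠ ∅ := by
    rintro rfl
    simp at hS
  rw [map_smul, nullExp_coordProd hS, smul_zero]

theorem nullExp_lowDegreeLikelihood_sq (D : ℕ) :
    nullExp p (lowDegreeLikelihood D δ y ^ 2)
      = ∑ S : Finset A with #S ∈ Icc 1 D, (δ ^ 2 * p) ^ #S * mixedMoment y S ^ 2 := by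
  rw [sq, lowDegreeLikelihood, sum_mul_sum, map_sum]
  refine sum_congr rfl fun S hS => ?_
  simp only [smul_mul_smul_comm, map_sum, map_smul, nullExp_coordProd_mul_coordProd, smul_eq_mul,
    mul_ite, mul_zero, sum_ite_eq, hS, if_true]
  ring

theorem expect_plantedExp_sub_nullExp [Nonempty Ω] (hy : ∀ ω a, y ω a = 1 ∨ y ω a = -1) {D : ℕ}
    {f : MvPolynomial A ℝ} (hf : f.totalDegree ≤ D) :
    (𝔼 ω, plantedExp p δ (y ω) fun z => MvPolynomial.eval z f)
        - nullExp p (fun z => MvPolynomial.eval z f)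
      = nullExp p (lowDegreeLikelihood D δ y * fun z => MvPolynomial.eval z f) := by
  have hsubset : ({S | #S ∈ Icc 1 D} : Finset (Finset A)) ⊆ univ.erase ∅ := fun S hS => by
    have := (mem_Icc.1 (mem_filter.1 hS).2).1
    simpa using (card_pos.1 this).ne_empty
  rw [expect_plantedExp_eq_sum hy, ← add_sum_erase _ _ (mem_univ ∅), card_empty, pow_zero,
    mixedMoment_empty, coordProd_empty, one_mul, one_mul, one_mul, add_sub_cancel_left,
    lowDegreeLikelihood, sum_mul, map_sum, ← sum_subset hsubset]
  · simp only [smul_mul_assoc, map_smul, smul_eq_mul]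
  · intro S hS hSD
    have hpos : 1 ≤ #S := card_pos.2 (nonempty_iff_ne_empty.2 (ne_of_mem_erase hS))
    have hdeg : f.totalDegree < #S := by
      refine hf.trans_lt (lt_of_not_ge fun hle => hSD ?_)
      exact mem_filter.2 ⟨mem_univ S, mem_Icc.2 ⟨hpos, hle⟩⟩
    rw [nullExp_coordProd_mul_eval_eq_zero hdeg, mul_zero]

theorem sq_expect_plantedExp_sub_nullExp_le [Nonempty Ω] (hp0 : 0 ≤ p) (hp1 : p ≤ 1)
    (hy : ∀ ω a, y ω a = 1 ∨ y ω a = -1) {D : ℕ} {f : MvPolynomial A ℝ}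
    (hf : f.totalDegree ≤ D) :
    ((𝔼 ω, plantedExp p δ (y ω) fun z => MvPolynomial.eval z f)
        - nullExp p (fun z => MvPolynomial.eval z f)) ^ 2
      ≤ (∑ S : Finset A with #S ∈ Icc 1 D, (δ ^ 2 * p) ^ #S * mixedMoment y S ^ 2) *
        (nullExp p ((fun z => MvPolynomial.eval z f) ^ 2)
          - nullExp p (fun z => MvPolynomial.eval z f) ^ 2) := by
  rw [expect_plantedExp_sub_nullExp hy hf, ← nullExp_lowDegreeLikelihood_sq]
  exact sq_nullExp_mul_le_of_centered hp0 hp1 (nullExp_lowDegreeLikelihood D) _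

end LowDegreeAdvantage

section Advantage

variable {n k D m : ℕ} {p δ : ℝ} {f : MvPolynomial (KSet n k) ℝ}

theorem expMix_eq_expect (F : (KSet n k → ℝ) → ℝ) :
    expMix n k p δ F = 𝔼 b, plantedExp p δ (kParity b) F := by
  rw [Fintype.expect_eq_sum_div_card, div_eq_inv_mul, Fintype.card_pi_const, Fintype.card_bool,
    Nat.cast_pow, Nat.cast_ofNat]
  rfl

theorem le_of_varQ_pos (hf : 0 < varQ n k p f) : k ≤ n := by
  by_contra! hkn
  have : IsEmpty (KSet n k) := ⟨fun α => by
    have := card_le_univ α.1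
    rw [α.2, Fintype.card_fin] at this
    omega⟩
  simp [varQ, expQ] at hf

/-- The advantage of the test `f`: the shift of its mean under the mixture planted model, in units
of its standard deviation under the null model. -/
noncomputable def advantage (n k : ℕ) (p δ : ℝ) (f : MvPolynomial (KSet n k) ℝ) : ℝ :=
  (expMix n k p δ (fun z => MvPolynomial.eval z f) - expQ n k p (fun z => MvPolynomial.eval z f))
    / √(varQ n k p f)

theorem advantage_sq_le (hp0 : 0 ≤ p) (hp1 : p ≤ 1) (hf : f.totalDegree ≤ D)
    (hvar : 0 < varQ n k p f) :
    advantage n k p δ f ^ 2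
      ≤ ∑ S : Finset (KSet n k) with #S ∈ Icc 1 D,
          (δ ^ 2 * p) ^ #S * mixedMoment kParity S ^ 2 := by
  rw [advantage, div_pow, Real.sq_sqrt hvar.le, div_le_iff₀ hvar, expMix_eq_expect]
  exact sq_expect_plantedExp_sub_nullExp_le hp0 hp1 kParity_eq_or hf

theorem sum_pow_card_mul_sq_mixedMoment_kParity_le (hn : 0 < n) (hk : 0 < k) {t : ℝ} (ht : 0 ≤ t) :
    ∑ S : Finset (KSet n k) with #S ∈ Icc 1 D, t ^ #S * mixedMoment kParity S ^ 2
      ≤ 2 * ∑ d ∈ Icc 1 D, (t * (Real.exp 1 / d * √(k * d * n / Real.exp 1) ^ k)) ^ d := by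
  rw [← sum_fiberwise_of_maps_to (fun S hS => (mem_filter.1 hS).2), mul_sum]
  refine sum_le_sum fun d hd => ?_
  have hfiber : ({S ∈ {S : Finset (KSet n k) | #S ∈ Icc 1 D} | #S = d} : Finset _)
      = powersetCard d univ := by
    ext S
    simp only [mem_filter, mem_univ, true_and, mem_powersetCard, subset_univ, and_iff_right_iff_imp]
    rintro rfl
    exact hd
  rw [hfiber]
  calc ∑ S ∈ powersetCard d univ, t ^ #S * mixedMoment kParity S ^ 2
      ≤ ∑ S ∈ powersetCard d univ, t ^ d * mixedMoment kParity S := by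
        refine sum_le_sum fun S hS => ?_
        rw [(mem_powersetCard.1 hS).2]
        gcongr
        exact pow_le_of_le_one (mixedMoment_kParity_nonneg S) (mixedMoment_kParity_le_one S)
          two_ne_zero
    _ ≤ t ^ d * (2 * (Real.exp 1 / d * √(k * d * n / Real.exp 1) ^ k) ^ d) := by
        rw [← mul_sum]
        gcongr
        exact sum_mixedMoment_kParity_le hn hk (mem_Icc.1 hd).1
    _ = _ := by rw [mul_pow]; ring

/-- The quantity `m δ² C_k D^{k/2-1} / n^{k/2}` which governs the advantage of tests of degree at
most `D`. -/
noncomputable def signalRatio (n k D m : ℕ) (δ : ℝ) : ℝ :=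
  (m : ℝ) * δ ^ 2 * Ck k * (D : ℝ) ^ ((k : ℝ) / 2 - 1) / (n : ℝ) ^ ((k : ℝ) / 2)

/-- A constant depending only on `k` such that `ratioConst k * signalRatio n k D m δ` dominates the
ratio of the geometric series that bounds the squared advantage. -/
noncomputable def ratioConst (k : ℕ) : ℝ :=
  (k : ℝ) ^ k * k.factorial * (Real.exp 1 * (k / Real.exp 1) ^ ((k : ℝ) / 2)) / Ck k

theorem Ck_pos (hk : 0 < k) : 0 < Ck k := by
  unfold Ck
  positivity

theorem signalRatio_nonneg : 0 ≤ signalRatio n k D m δ := by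
  unfold signalRatio Ck
  positivity

theorem ratioConst_nonneg : 0 ≤ ratioConst k := by
  unfold ratioConst Ck
  positivity

theorem pow_le_pow_mul_factorial_mul_choose (hk : 0 < k) (hkn : k ≤ n) :
    n ^ k ≤ k ^ k * k.factorial * n.choose k := by
  have hbase : n ≤ k * (n + 1 - k) := by
    obtain ⟨j, rfl⟩ := Nat.exists_eq_add_of_le hkn
    rw [show k + j + 1 - k = j + 1 by omega]
    nlinarith
  calc n ^ k ≤ (k * (n + 1 - k)) ^ k := Nat.pow_le_pow_left hbase k
    _ = k ^ k * (n + 1 - k) ^ k := mul_pow _ _ _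
    _ ≤ k ^ k * n.descFactorial k := Nat.mul_le_mul_left _ (Nat.pow_sub_le_descFactorial n k)
    _ = _ := by rw [Nat.descFactorial_eq_factorial_mul_choose, mul_assoc]

theorem div_choose_le (hk : 0 < k) (hkn : k ≤ n) :
    (m : ℝ) / n.choose k ≤ m * (k ^ k * k.factorial) / n ^ k := by
  have h : (n : ℝ) ^ k ≤ k ^ k * k.factorial * n.choose k := by
    exact_mod_cast pow_le_pow_mul_factorial_mul_choose hk hkn
  have hchoose : (0 : ℝ) < n.choose k := by exact_mod_cast Nat.choose_pos hkn
  have hn : (0 : ℝ) < n := by exact_mod_cast hk.trans_le hkn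
  rw [div_le_div_iff₀ hchoose (by positivity), mul_assoc]
  gcongr

theorem div_mul_sqrt_pow_eq {d : ℕ} (hd : 0 < d) (n k : ℕ) :
    Real.exp 1 / d * √(k * d * n / Real.exp 1) ^ k
      = Real.exp 1 * (k / Real.exp 1) ^ ((k : ℝ) / 2) * (d : ℝ) ^ ((k : ℝ) / 2 - 1)
        * (n : ℝ) ^ ((k : ℝ) / 2) := by
  have hd' : (d : ℝ) ≠ 0 := by exact_mod_cast hd.ne'
  rw [← Real.rpow_natCast, ← Real.rpow_div_two_eq_sqrt _ (by positivity),
    show k * d * n / Real.exp 1 = k / Real.exp 1 * d * n by ring,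
    Real.mul_rpow (by positivity) (by positivity), Real.mul_rpow (by positivity) (by positivity),
    Real.rpow_sub_one hd']
  ring

theorem mul_div_choose_mul_le_ratioConst_mul_signalRatio {d : ℕ} (hk : 2 ≤ k) (hkn : k ≤ n)
    (hd : 0 < d) (hdD : d ≤ D) :
    δ ^ 2 * (m / n.choose k) * (Real.exp 1 / d * √(k * d * n / Real.exp 1) ^ k)
      ≤ ratioConst k * signalRatio n k D m δ := by
  have hn : (0 : ℝ) < n := by exact_mod_cast (by omega : 0 < n)
  have hCk : 0 < Ck k := Ck_pos (by omega)
  have hnk : (n : ℝ) ^ k = (n : ℝ) ^ ((k : ℝ) / 2) * (n : ℝ) ^ ((k : ℝ) / 2) := by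
    rw [← Real.rpow_add hn, add_halves, Real.rpow_natCast]
  have hexponent : 0 ≤ (k : ℝ) / 2 - 1 := by
    have : (2 : ℝ) ≤ k := by exact_mod_cast hk
    linarith
  rw [div_mul_sqrt_pow_eq hd]
  calc _ ≤ δ ^ 2 * (m * (k ^ k * k.factorial) / n ^ k) * (Real.exp 1
          * (k / Real.exp 1) ^ ((k : ℝ) / 2) * (D : ℝ) ^ ((k : ℝ) / 2 - 1)
          * (n : ℝ) ^ ((k : ℝ) / 2)) := by
        gcongr δ ^ 2 * ?_ * (_ * ?_ * _)
        · exact div_choose_le (by omega) hkn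
        · gcongr
    _ = _ := by
        rw [hnk, ratioConst, signalRatio]
        field_simp

theorem abs_advantage_le (hk : 2 ≤ k) (hm : k ≤ n → m ≤ n.choose k) (hf : f.totalDegree ≤ D)
    (hvar : 0 < varQ n k (m / n.choose k) f) :
    |advantage n k (m / n.choose k) δ f|
      ≤ √(2 * ∑ d ∈ Icc 1 D, (ratioConst k * signalRatio n k D m δ) ^ d) := by
  have hkn : k ≤ n := le_of_varQ_pos hvar
  have hp0 : (0 : ℝ) ≤ m / n.choose k := by positivity
  have hp1 : (m : ℝ) / n.choose k ≤ 1 :=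
    div_le_one_of_le₀ (by exact_mod_cast hm hkn) (by positivity)
  refine Real.abs_le_sqrt ((advantage_sq_le hp0 hp1 hf hvar).trans <|
    (sum_pow_card_mul_sq_mixedMoment_kParity_le (by omega) (by omega) (by positivity)).trans ?_)
  gcongr 2 * ∑ d ∈ _, ?_ ^ d with d hd
  exact mul_div_choose_mul_le_ratioConst_mul_signalRatio hk hkn (mem_Icc.1 hd).1 (mem_Icc.1 hd).2

end Advantage

section Asymptotics

variable {k : ℕ} {D m : ℕ → ℕ} {δ : ℕ → ℝ}

theorem sum_Icc_one_pow_le {r : ℝ} (hr0 : 0 ≤ r) (hr1 : r < 1) (D : ℕ) :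
    ∑ d ∈ Icc 1 D, r ^ d ≤ r / (1 - r) := by
  simpa [Ico_add_one_right_eq_Icc] using geom_sum_Ico_le_of_lt_one (m := 1) (n := D + 1) hr0 hr1

theorem tendsto_advantage_zero (hk : 2 ≤ k) (hm : ∀ n, k ≤ n → m n ≤ n.choose k)
    (hratio : Filter.Tendsto (fun n => signalRatio n k (D n) (m n) (δ n)) Filter.atTop (nhds 0))
    {f : (n : ℕ) → MvPolynomial (KSet n k) ℝ} (hf : ∀ n, (f n).totalDegree ≤ D n)
    (hvar : ∀ᶠ n in Filter.atTop, 0 < varQ n k (m n / n.choose k) (f n)) :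
    Filter.Tendsto (fun n => advantage n k (m n / n.choose k) (δ n) (f n)) Filter.atTop
      (nhds 0) := by
  let r (n : ℕ) : ℝ := ratioConst k * signalRatio n k (D n) (m n) (δ n)
  have hr : Filter.Tendsto r Filter.atTop (nhds 0) := by
    simpa [r] using hratio.const_mul (ratioConst k)
  have hbound : Filter.Tendsto (fun n => √(2 * (r n / (1 - r n)))) Filter.atTop (nhds 0) := by
    have hquot := hr.div (hr.const_sub 1) (by norm_num)
    simpa using (hquot.const_mul 2).sqrt
  refine squeeze_zero_norm' ?_ hbound
  filter_upwards [hvar, hr.eventually_lt_const one_pos] with n hn hr1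
  refine (abs_advantage_le hk (hm n) (hf n) hn).trans ?_
  gcongr
  exact sum_Icc_one_pow_le (mul_nonneg ratioConst_nonneg signalRatio_nonneg) hr1 (D n)

theorem exists_forall_abs_advantage_le (hk : 2 ≤ k) (hm : ∀ n, k ≤ n → m n ≤ n.choose k) {D₀ : ℕ}
    {c : ℝ} (hratio : ∀ n, k ≤ n → signalRatio n k D₀ (m n) (δ n) ≤ c) :
    ∃ B : ℝ, ∀ n, ∀ f : MvPolynomial (KSet n k) ℝ, f.totalDegree ≤ D₀ →
      0 < varQ n k (m n / n.choose k) f → |advantage n k (m n / n.choose k) (δ n) f| ≤ B := by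
  refine ⟨√(2 * ∑ d ∈ Icc 1 D₀, (ratioConst k * c) ^ d), fun n f hf hvar =>
    (abs_advantage_le hk (hm n) hf hvar).trans ?_⟩
  gcongr
  · exact mul_nonneg ratioConst_nonneg signalRatio_nonneg
  · exact ratioConst_nonneg
  · exact hratio n (le_of_varQ_pos hvar)

end Asymptotics

theorem stmt18_general (k : ℕ) (hk : 2 ≤ k) (D : ℕ → ℕ) (δ : ℕ → ℝ) (m : ℕ → ℕ)
    (hm : ∀ n, k ≤ n → m n ≤ n.choose k) :
    (Filter.Tendsto (fun n => signalRatio n k (D n) (m n) (δ n)) Filter.atTop (nhds 0) →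
      ∀ f : (n : ℕ) → MvPolynomial (KSet n k) ℝ, (∀ n, (f n).totalDegree ≤ D n) →
        (∀ᶠ n in Filter.atTop, 0 < varQ n k (m n / n.choose k) (f n)) →
        Filter.Tendsto (fun n => advantage n k (m n / n.choose k) (δ n) (f n)) Filter.atTop
          (nhds 0)) ∧
    ∀ D₀ : ℕ, ∀ c : ℝ, (∀ n, k ≤ n → signalRatio n k D₀ (m n) (δ n) ≤ c) →
      ∃ B : ℝ, ∀ n, ∀ f : MvPolynomial (KSet n k) ℝ, f.totalDegree ≤ D₀ →
        0 < varQ n k (m n / n.choose k) f → |advantage n k (m n / n.choose k) (δ n) f| ≤ B :=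
  ⟨fun hratio _ hf hvar => tendsto_advantage_zero hk hm hratio hf hvar,
    fun _ _ hratio => exists_forall_abs_advantage_le hk hm hratio⟩

/-- Low-degree hardness: fix `k ≥ 3` and `C_k = e^{k/2+2} k^{(k+1)/2}/k!`.
For sequences `D(n) ≥ 1`, `δ(n) ∈ (0,1]` and positive sample sizes `m(n) ≤ binom(n,k)` with
`p(n) = m(n)/binom(n,k)`: if `m(n)·δ(n)²·C_k·D(n)^{k/2−1}/n^{k/2} → 0`, then for every
sequence `f_n` of degree-`≤ D(n)` polynomial tests with positive null variance (eventually),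
the advantage `(E_P[f_n] − E_Q[f_n]) / sqrt(Var_Q(f_n)) → 0`. Moreover, if `D(n) = D₀` is
constant and `m(n)·δ(n)²·C_k·D₀^{k/2−1}/n^{k/2}` is bounded by a constant, then the
advantage is bounded uniformly over `n` and over all such polynomial tests. -/
theorem stmt18 (k : ℕ) (hk : 3 ≤ k)
    (D : ℕ → ℕ) (δ : ℕ → ℝ) (m : ℕ → ℕ)
    (hD : ∀ n, 1 ≤ D n) (hδ : ∀ n, 0 < δ n ∧ δ n ≤ 1)
    (hm : ∀ n, 1 ≤ m n) (hmb : ∀ n, k ≤ n → m n ≤ n.choose k) :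
    (Filter.Tendsto
        (fun n => (m n : ℝ) * (δ n) ^ 2 * Ck k * ((D n : ℝ)) ^ ((k : ℝ) / 2 - 1)
          / (n : ℝ) ^ ((k : ℝ) / 2)) Filter.atTop (nhds 0) →
      ∀ f : (n : ℕ) → MvPolynomial (KSet n k) ℝ,
        (∀ n, (f n).totalDegree ≤ D n) →
        (∀ᶠ n in Filter.atTop, 0 < varQ n k ((m n : ℝ) / (n.choose k : ℝ)) (f n)) →
        Filter.Tendsto (fun n =>
          (expMix n k ((m n : ℝ) / (n.choose k : ℝ)) (δ n)
              (fun z => MvPolynomial.eval z (f n))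
            - expQ n k ((m n : ℝ) / (n.choose k : ℝ))
              (fun z => MvPolynomial.eval z (f n)))
          / Real.sqrt (varQ n k ((m n : ℝ) / (n.choose k : ℝ)) (f n)))
          Filter.atTop (nhds 0)) ∧
    (∀ D₀ : ℕ, ∀ c : ℝ, (∀ n, D n = D₀) →
      (∀ n : ℕ, 1 ≤ n → (m n : ℝ) * (δ n) ^ 2 * Ck k * ((D₀ : ℝ)) ^ ((k : ℝ) / 2 - 1)
          / (n : ℝ) ^ ((k : ℝ) / 2) ≤ c) →
      ∃ B : ℝ, ∀ n : ℕ, ∀ f : MvPolynomial (KSet n k) ℝ, f.totalDegree ≤ D₀ →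
        0 < varQ n k ((m n : ℝ) / (n.choose k : ℝ)) f →
        |(expMix n k ((m n : ℝ) / (n.choose k : ℝ)) (δ n)
              (fun z => MvPolynomial.eval z f)
            - expQ n k ((m n : ℝ) / (n.choose k : ℝ))
              (fun z => MvPolynomial.eval z f))
          / Real.sqrt (varQ n k ((m n : ℝ) / (n.choose k : ℝ)) f)| ≤ B) := by
  obtain ⟨htendsto, hbounded⟩ := stmt18_general k (by omega) D δ m hmb
  exact ⟨htendsto, fun D₀ c _ hc => hbounded D₀ c fun n hn => hc n (by omega)⟩
end
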